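/- (Blaschke–Santaló inequality) Let X ⊂ ℝⁿ be a symmetric convex body and ħ > 0. Then the Mahler volume satisfies v(X) = Vol(X)·Vol(X^ħ) ≤ (πħ)ⁿ/Γ(n/2 + 1)², i.e. v(X) ≤ Vol(B^n(√ħ))², with equality if and only if X is an ellipsoid centered at the origin (the image of the ball B^n(√ħ) under an invertible linear map). -/

import Mathlib

open MeasureTheory
open scoped RealInnerProductSpace

/-- The `ħ`-polar dual of a set `X ⊂ ℝⁿ`: all `p` with `p·x ≤ ħ` for every `x ∈ X`. -/
def polarDualSet (n : ℕ) (hb : ℝ) (X : Set (EuclideanSpace ℝ (Fin n))) :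
    Set (EuclideanSpace ℝ (Fin n)) :=
  {p | ∀ x ∈ X, (⟪p, x⟫ : ℝ) ≤ hb}

section Prelim

open MeasureTheory Set Filter Topology

lemma quantile_exists (U : Set ℝ) (hU : IsOpen U) (hUc : Convex ℝ U) (hne : U.Nonempty) (p : ℝ → ℝ)
    (hp : ContinuousOn p U) (hpos : ∀ s ∈ U, 0 < p s) (hInt : IntegrableOn p U) :
    0 < (∫ s in U, p s) ∧
    ∃ x : ℝ → ℝ, (∀ τ ∈ Ioo (0:ℝ) 1, x τ ∈ U) ∧ (∀ s ∈ U, ∃ τ ∈ Ioo (0:ℝ) 1, x τ = s) ∧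
      ∀ τ ∈ Ioo (0:ℝ) 1, HasDerivAt x ((∫ s in U, p s) / p (x τ)) τ := by
  set M := ∫ s in U, p s with hM
  set k : ℝ → ℝ := U.indicator p with hk
  have hki : Integrable k := hInt.integrable_indicator hU.measurableSet
  have hk0 : ∀ s, 0 ≤ k s := fun s => indicator_nonneg (fun s hs => (hpos s hs).le) s
  have hkM : ∫ s, k s = M := integral_indicator hU.measurableSet
  set R : ℝ → ℝ := fun s => ∫ u in Iic s, k u with hR
  have hRd : ∀ s ∈ U, HasDerivAt R (p s) s := by
    intro s hs
    have h1 : ∀ t, R t = R s + ∫ u in s..t, k u := by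
      intro t
      rw [← intervalIntegral.integral_Iic_sub_Iic hki.integrableOn hki.integrableOn]
      simp [hR]
    have hkp : k =ᶠ[𝓝 s] p := by
      filter_upwards [hU.mem_nhds hs] with t ht
      simp [hk, ht]
    have hc : ContinuousAt k s := (hp.continuousAt (hU.mem_nhds hs)).congr hkp.symm
    have h2 := intervalIntegral.integral_hasDerivAt_right (f := k) (a := s) (b := s)
      hki.intervalIntegrable (hki.aestronglyMeasurable.stronglyMeasurableAtFilter) hc
    have : k s = p s := by simp [hk, hs]
    rw [this] at h2
    have h3 := h2.const_add (R s)
    exact h3.congr_of_eventuallyEq (Eventually.of_forall h1)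
  have hRc : Continuous R := by
    have h1 : R = fun t => R 0 + ∫ u in (0:ℝ)..t, k u := by
      funext t
      rw [← intervalIntegral.integral_Iic_sub_Iic hki.integrableOn hki.integrableOn]
      simp [hR]
    rw [h1]
    exact continuous_const.add (intervalIntegral.continuous_primitive (fun a b => hki.intervalIntegrable) 0)
  have hRm : StrictMonoOn R U := by
    apply strictMonoOn_of_deriv_pos hUc hRc.continuousOn
    intro s hs
    rw [hU.interior_eq] at hs
    rw [(hRd s hs).deriv]; exact hpos s hs
  have hR0 : ∀ s, 0 ≤ R s := fun s => integral_nonneg hk0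
  have hRle : ∀ s, R s ≤ M := fun s => by
    rw [← hkM]; exact setIntegral_le_integral hki (Eventually.of_forall hk0)
  have hRU : ∀ s ∈ U, 0 < R s ∧ R s < M := by
    intro s hs
    obtain ⟨ε, hε, hb⟩ := Metric.isOpen_iff.1 hU s hs
    have h1 : s - ε/2 ∈ U := hb (by simp [abs_of_pos hε, hε])
    have h2 : s + ε/2 ∈ U := hb (by simp [abs_of_pos hε, hε])
    exact ⟨(hR0 _).trans_lt (hRm h1 hs (by linarith)), (hRm hs h2 (by linarith)).trans_le (hRle _)⟩
  have hM0 : 0 < M := by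
    obtain ⟨s, hs⟩ := hne
    exact (hRU s hs).1.trans (hRU s hs).2
  have hbot : Tendsto R atBot (𝓝 0) := by
    have := tendsto_setIntegral_of_antitone (μ := volume) (f := k) (s := fun t : ℝᵒᵈ => Iic (OrderDual.ofDual t))
      (fun i => measurableSet_Iic) (fun a b hab => Iic_subset_Iic.2 hab) ⟨OrderDual.toDual 0, hki.integrableOn⟩
    have he : (⋂ n : ℝᵒᵈ, Iic (OrderDual.ofDual n)) = (∅ : Set ℝ) := by
      ext t; simp only [mem_iInter, mem_Iic, mem_empty_iff_false, iff_false, not_forall, not_le]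
      exact ⟨OrderDual.toDual (t-1), by simp⟩
    rw [he, setIntegral_empty] at this
    exact this
  have htop : Tendsto R atTop (𝓝 M) := by
    have := tendsto_setIntegral_of_monotone (μ := volume) (f := k) (s := fun t : ℝ => Iic t)
      (fun i => measurableSet_Iic) (fun a b hab => Iic_subset_Iic.2 hab) hki.integrableOn
    have he : (⋃ n : ℝ, Iic n) = (univ : Set ℝ) := by
      ext t; simp only [mem_iUnion, mem_Iic, mem_univ, iff_true]; exact ⟨t, le_rfl⟩
    rw [he, setIntegral_univ, hkM] at this
    exact this
  have hsurj : ∀ m ∈ Ioo 0 M, ∃ s ∈ U, R s = m := by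
    intro m hm
    obtain ⟨s, hs⟩ : ∃ s, R s = m := by
      obtain ⟨a, ha⟩ := (hbot.eventually (gt_mem_nhds hm.1)).exists
      obtain ⟨b, hb⟩ := (htop.eventually (lt_mem_nhds hm.2)).exists
      exact mem_range_of_exists_le_of_exists_ge hRc ⟨a, ha.le⟩ ⟨b, hb.le⟩
    refine ⟨s, ?_, hs⟩
    by_contra hsU
    have hside : (∀ u ∈ U, u < s) ∨ (∀ u ∈ U, s < u) := by
      by_contra! h
      obtain ⟨⟨u, hu, hu'⟩, ⟨v, hv, hv'⟩⟩ := h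
      exact hsU (hUc.ordConnected.out hv hu ⟨hv', hu'⟩)
    rcases hside with h | h
    · have : R s = M := by
        rw [← hkM, hR]
        apply setIntegral_eq_integral_of_forall_compl_eq_zero
        intro u hu
        simp only [hk]
        apply indicator_of_notMem
        intro hu'
        exact hu (h u hu').le
      linarith [hm.2]
    · have : R s = 0 := by
        apply setIntegral_eq_zero_of_forall_eq_zero
        intro u hu
        simp only [hk]
        apply indicator_of_notMem
        intro hu'
        exact absurd (h u hu') (not_lt.2 hu)
      linarith [hm.1]
  refine ⟨hM0, ?_⟩
  have hsurj' : ∀ τ ∈ Ioo (0:ℝ) 1, ∃ s ∈ U, R s = M * τ := fun τ hτ =>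
    hsurj _ ⟨mul_pos hM0 hτ.1, by nlinarith [hτ.2]⟩
  choose! x hxU hx using hsurj'
  have hxs : ∀ s ∈ U, ∃ τ ∈ Ioo (0:ℝ) 1, x τ = s := by
    intro s hs
    have h := hRU s hs
    have hτ : R s / M ∈ Ioo (0:ℝ) 1 := ⟨div_pos h.1 hM0, (div_lt_one hM0).2 h.2⟩
    refine ⟨R s / M, hτ, hRm.injOn (hxU _ hτ) hs ?_⟩
    rw [hx _ hτ]; field_simp
  refine ⟨x, hxU, hxs, ?_⟩
  have hxm : StrictMonoOn x (Ioo 0 1) := by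
    intro a ha b hb hab
    rw [← hRm.lt_iff_lt (hxU a ha) (hxU b hb), hx a ha, hx b hb]
    exact mul_lt_mul_of_pos_left hab hM0
  intro τ hτ
  have hcont : ContinuousAt x τ := by
    apply hxm.continuousAt_of_image_mem_nhds (isOpen_Ioo.mem_nhds hτ)
    apply mem_of_superset (hU.mem_nhds (hxU τ hτ))
    intro s hs
    obtain ⟨t, ht, h⟩ := hxs s hs
    exact ⟨t, ht, h⟩
  have h1 : HasDerivAt (fun s => R s / M) (p (x τ) / M) (x τ) := (hRd _ (hxU τ hτ)).div_const M
  have h2 := h1.of_local_left_inverse hcont (div_ne_zero (hpos _ (hxU τ hτ)).ne' hM0.ne') (by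
    filter_upwards [isOpen_Ioo.mem_nhds hτ] with t ht
    rw [hx t ht]; field_simp)
  rwa [inv_div] at h2


lemma core_pointwise (x y p q P Q : ℝ) (hx : 0 < x) (hy : 0 < y) (hp : 0 < p) (hq : 0 < q)
    (hP : 0 < P) (hQ : 0 < Q) (h : p * q ≤ Real.exp (-(x * y))) :
    √(P * Q) ≤ (P / p * y + x * (Q / q)) / (2 * √(x * y)) * Real.exp (-(√(x*y))^2 / 2) ∧
    ((P / p * y + x * (Q / q)) / (2 * √(x * y)) * Real.exp (-(√(x*y))^2 / 2) = √(P * Q) →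
      P / p * y = x * (Q / q) ∧ p * q = Real.exp (-(x * y))) := by
  have hxy : 0 < x * y := mul_pos hx hy
  set A := P / p * y with hA
  set B := x * (Q / q) with hB
  have hA0 : 0 < A := by positivity
  have hB0 : 0 < B := by positivity
  set e := Real.exp (x * y) with he
  have he0 : 0 < e := Real.exp_pos _
  have h' : p * q * e ≤ 1 := by
    have : p * q * e ≤ Real.exp (-(x * y)) * e := by gcongr
    rwa [he, ← Real.exp_add, neg_add_cancel, Real.exp_zero] at this
  have hAB : A * B * (p * q) = x * y * (P * Q) := by
    rw [hA, hB]; field_simp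
  set H := (A + B) / (2 * √(x * y)) * Real.exp (-(√(x*y))^2 / 2) with hH
  have hH0 : 0 < H := by positivity
  have hH2 : H ^ 2 * (4 * (x * y) * e) = (A + B) ^ 2 := by
    rw [hH, mul_pow, div_pow, mul_pow, Real.sq_sqrt hxy.le, ← Real.exp_nat_mul]
    have : Real.exp (((2:ℕ):ℝ) * (-(x * y) / 2)) * e = 1 := by
      rw [he, ← Real.exp_add, ← Real.exp_zero]; congr 1; push_cast; ring
    calc _ = (A + B)^2 * (Real.exp (((2:ℕ):ℝ) * (-(x * y) / 2)) * e) := by field_simp; ring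
      _ = _ := by rw [this, mul_one]
  have hge : x * y * (P * Q) * e ≤ A * B := by
    rw [← hAB]
    calc A * B * (p * q) * e = A * B * (p * q * e) := by ring
      _ ≤ A * B * 1 := by gcongr
      _ = A * B := mul_one _
  constructor
  · apply Real.sqrt_le_iff.2 ⟨hH0.le, ?_⟩
    have : P * Q * (4 * (x * y) * e) ≤ H ^ 2 * (4 * (x * y) * e) := by
      rw [hH2]; nlinarith [sq_nonneg (A - B)]
    exact le_of_mul_le_mul_right this (by positivity)
  · intro heq
    have h2 : H ^ 2 = P * Q := by rw [heq, Real.sq_sqrt (by positivity)]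
    rw [h2] at hH2
    have h3 : A = B := by nlinarith [sq_nonneg (A - B)]
    refine ⟨h3, ?_⟩
    have h4 : A * B = A * B * (p * q * e) := by
      have : A * B = x * y * (P * Q) * e := by rw [h3] at hH2 ⊢; nlinarith
      conv_lhs => rw [this, ← hAB]
      ring
    have h5 : p * q * e = 1 := by
      have : A * B ≠ 0 := by positivity
      exact mul_left_cancel₀ this (by rw [← h4, mul_one])
    rw [Real.exp_neg, ← he]
    field_simp; exact h5

lemma lint_gauss_half (b : ℝ) (hb : 0 < b) :
    ∫⁻ r in Ioi (0:ℝ), ENNReal.ofReal (Real.exp (-(b * r ^ 2))) = ENNReal.ofReal (√(Real.pi / b) / 2) := by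
  rw [← ofReal_integral_eq_lintegral_ofReal]
  · congr 1
    rw [← integral_gaussian_Ioi b]
    simp
  · have := (integrable_exp_neg_mul_sq hb).integrableOn (s := Ioi 0)
    simpa [neg_mul, IntegrableOn] using this
  · exact Eventually.of_forall fun _ => (Real.exp_pos _).le

lemma const_of_quad (U : Set ℝ) (hU : IsOpen U) (hUc : Convex ℝ U) (h : ℝ → ℝ) (K : ℝ)
    (hh : ∀ s ∈ U, ∀ t ∈ U, |h s - h t| ≤ K * (s - t)^2) : ∀ s ∈ U, ∀ t ∈ U, h s = h t := by
  have hd : ∀ s ∈ U, HasDerivAt h 0 s := by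
    intro s hs
    rw [hasDerivAt_iff_isLittleO]
    have h1 : (fun t => h t - h s - (t - s) • (0:ℝ)) =O[𝓝 s] fun t => (t - s)^2 := by
      apply Asymptotics.IsBigO.of_bound K
      filter_upwards [hU.mem_nhds hs] with t ht
      simpa using hh t ht s hs
    apply h1.trans_isLittleO
    have : (fun t : ℝ => (t - s)^2) = fun t => (t - s) * (t - s) := by ext; ring
    rw [this]
    have h2 : (fun t : ℝ => t - s) =o[𝓝 s] (fun _ => (1:ℝ)) := by
      rw [Asymptotics.isLittleO_one_iff]
      have : Tendsto (fun t => t - s) (𝓝 s) (𝓝 (s - s)) := tendsto_id.sub_const s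
      simpa using this
    simpa using h2.mul_isBigO (Asymptotics.isBigO_refl (fun t : ℝ => t - s) (𝓝 s))
  intro s hs t ht
  exact hU.is_const_of_deriv_eq_zero hUc.isPreconnected
    (fun u hu => (hd u hu).differentiableAt.differentiableWithinAt) (fun u hu => (hd u hu).deriv) hs ht


lemma full_of_null (U : Set ℝ) (hUc : Convex ℝ U) (hUpos : U ⊆ Ioi 0)
    (hnull : ∀ J : Set ℝ, IsOpen J → J ⊆ Ioi 0 → Disjoint J U → J = ∅) : U = Ioi 0 := by
  apply Subset.antisymm hUpos
  intro s hs
  by_contra hsU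
  have hside : (∀ u ∈ U, u < s) ∨ (∀ u ∈ U, s < u) := by
    by_contra! h
    obtain ⟨⟨u, hu, hu'⟩, ⟨v, hv, hv'⟩⟩ := h
    exact hsU (hUc.ordConnected.out hv hu ⟨hv', hu'⟩)
  have hs0 : 0 < s := hs
  rcases hside with h | h
  · have := hnull (Ioi s) isOpen_Ioi (Ioi_subset_Ioi hs0.le)
      (disjoint_left.2 fun u hu hu' => lt_asymm hu (h u hu'))
    exact absurd this nonempty_Ioi.ne_empty
  · have := hnull (Ioo 0 s) isOpen_Ioo (fun u hu => hu.1)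
      (disjoint_left.2 fun u hu hu' => lt_asymm hu.2 (h u hu'))
    exact absurd this (nonempty_Ioo.2 hs0).ne_empty

lemma core_1d (U V : Set ℝ) (hU : IsOpen U) (hUc : Convex ℝ U) (hUne : U.Nonempty) (hUpos : U ⊆ Ioi 0)
    (hV : IsOpen V) (hVc : Convex ℝ V) (hVne : V.Nonempty) (hVpos : V ⊆ Ioi 0) (p q : ℝ → ℝ)
    (hp : ContinuousOn p U) (hp0 : ∀ s ∈ U, 0 < p s) (hpi : IntegrableOn p U)
    (hq : ContinuousOn q V) (hq0 : ∀ s ∈ V, 0 < q s) (hqi : IntegrableOn q V)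
    (hpq : ∀ s ∈ U, ∀ t ∈ V, p s * q t ≤ Real.exp (-(s * t))) :
    (∫ s in U, p s) * (∫ t in V, q t) ≤ Real.pi / 2 ∧
    ((∫ s in U, p s) * (∫ t in V, q t) = Real.pi / 2 → U = Ioi 0 ∧ V = Ioi 0 ∧
      ∃ l c : ℝ, 0 < l ∧ 0 < c ∧ (∀ s ∈ Ioi (0:ℝ), p s = c * Real.exp (-(l / 2 * s ^ 2))) ∧
        ∀ t ∈ Ioi (0:ℝ), q t = c⁻¹ * Real.exp (-(1 / (2 * l) * t ^ 2))) := by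
  obtain ⟨hP0, x, hxU, hxs, hxd⟩ := quantile_exists U hU hUc hUne p hp hp0 hpi
  obtain ⟨hQ0, y, hyV, hys, hyd⟩ := quantile_exists V hV hVc hVne q hq hq0 hqi
  set P := ∫ s in U, p s
  set Q := ∫ s in V, q s
  have hx0 : ∀ τ ∈ Ioo (0:ℝ) 1, 0 < x τ := fun τ hτ => hUpos (hxU τ hτ)
  have hy0 : ∀ τ ∈ Ioo (0:ℝ) 1, 0 < y τ := fun τ hτ => hVpos (hyV τ hτ)
  set r : ℝ → ℝ := fun τ => √(x τ * y τ) with hr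
  set r' : ℝ → ℝ := fun τ => (P / p (x τ) * y τ + x τ * (Q / q (y τ))) / (2 * √(x τ * y τ)) with hr'
  have hr0 : ∀ τ ∈ Ioo (0:ℝ) 1, 0 < r τ := fun τ hτ => Real.sqrt_pos.2 (mul_pos (hx0 τ hτ) (hy0 τ hτ))
  have hr'0 : ∀ τ ∈ Ioo (0:ℝ) 1, 0 < r' τ := fun τ hτ => by
    have := hx0 τ hτ; have := hy0 τ hτ; have := hp0 _ (hxU τ hτ); have := hq0 _ (hyV τ hτ)
    simp only [hr']; positivity
  have hrd : ∀ τ ∈ Ioo (0:ℝ) 1, HasDerivAt r (r' τ) τ := fun τ hτ =>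
    ((hxd τ hτ).mul (hyd τ hτ)).sqrt (mul_pos (hx0 τ hτ) (hy0 τ hτ)).ne'
  have hrm : StrictMonoOn r (Ioo 0 1) := by
    apply strictMonoOn_of_deriv_pos (convex_Ioo 0 1)
    · exact fun τ hτ => (hrd τ hτ).continuousAt.continuousWithinAt
    · intro τ hτ
      rw [isOpen_Ioo.interior_eq] at hτ
      rw [(hrd τ hτ).deriv]; exact hr'0 τ hτ
  set w : ℝ → ENNReal := fun u => ENNReal.ofReal (Real.exp (-u ^ 2 / 2)) with hw
  have hw2 : ∫⁻ u in Ioi (0:ℝ), w u = ENNReal.ofReal √(Real.pi / 2) := by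
    have := lint_gauss_half (1/2) (by norm_num)
    convert this using 2
    · simp only [hw]; ext u; congr 2; ring
    · rw [show Real.pi / (1/2) = (Real.pi / 2) * 2 ^ 2 by ring, Real.sqrt_mul (by positivity),
        Real.sqrt_sq (by norm_num)]; ring
  have hcv := lintegral_image_eq_lintegral_abs_deriv_mul (measurableSet_Ioo (a := (0:ℝ)) (b := 1))
    (fun τ hτ => (hrd τ hτ).hasDerivWithinAt) hrm.injOn w
  set h : ℝ → ℝ := fun τ => r' τ * Real.exp (-(r τ) ^ 2 / 2) with hh
  have hcv' : ∫⁻ u in r '' Ioo 0 1, w u = ∫⁻ τ in Ioo (0:ℝ) 1, ENNReal.ofReal (h τ) := by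
    rw [hcv]
    apply setLIntegral_congr_fun measurableSet_Ioo
    intro τ hτ
    simp only [hh, hw]
    rw [abs_of_pos (hr'0 τ hτ), ENNReal.ofReal_mul (hr'0 τ hτ).le]
  have hpw := fun τ (hτ : τ ∈ Ioo (0:ℝ) 1) => core_pointwise (x τ) (y τ) (p (x τ)) (q (y τ)) P Q (hx0 τ hτ) (hy0 τ hτ)
    (hp0 _ (hxU τ hτ)) (hq0 _ (hyV τ hτ)) hP0 hQ0 (hpq _ (hxU τ hτ) _ (hyV τ hτ))
  have hsub : r '' Ioo 0 1 ⊆ Ioi 0 := by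
    rintro _ ⟨τ, hτ, rfl⟩; exact hr0 τ hτ
  have hconst : ∫⁻ τ in Ioo (0:ℝ) 1, ENNReal.ofReal √(P * Q) = ENNReal.ofReal √(P * Q) := by simp
  have hlow : ENNReal.ofReal √(P * Q) ≤ ∫⁻ τ in Ioo (0:ℝ) 1, ENNReal.ofReal (h τ) := by
    rw [← hconst]
    apply setLIntegral_mono' measurableSet_Ioo
    intro τ hτ
    exact ENNReal.ofReal_le_ofReal (hpw τ hτ).1
  have hup : ∫⁻ u in r '' Ioo 0 1, w u ≤ ENNReal.ofReal √(Real.pi / 2) := by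
    rw [← hw2]; exact lintegral_mono_set hsub
  have hPQ : 0 < P * Q := mul_pos hP0 hQ0
  have hpi2 : 0 < Real.pi / 2 := by positivity
  refine ⟨?_, ?_⟩
  · have := hlow.trans (hcv' ▸ hup)
    rw [ENNReal.ofReal_le_ofReal_iff (Real.sqrt_nonneg _)] at this
    exact (Real.sqrt_le_sqrt_iff hpi2.le).1 this
  intro heq
  have hInt : ∫⁻ τ in Ioo (0:ℝ) 1, ENNReal.ofReal (h τ) = ENNReal.ofReal √(P * Q) :=
    le_antisymm (by rw [← hcv', heq]; exact hup) hlow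
  have hxc : ContinuousOn x (Ioo 0 1) := fun τ hτ => (hxd τ hτ).continuousAt.continuousWithinAt
  have hyc : ContinuousOn y (Ioo 0 1) := fun τ hτ => (hyd τ hτ).continuousAt.continuousWithinAt
  have hpx : ContinuousOn (fun τ => p (x τ)) (Ioo 0 1) := hp.comp hxc hxU
  have hqy : ContinuousOn (fun τ => q (y τ)) (Ioo 0 1) := hq.comp hyc hyV
  have hrc : ContinuousOn r (Ioo 0 1) := fun τ hτ => (hrd τ hτ).continuousAt.continuousWithinAt
  have hhc : ContinuousOn h (Ioo 0 1) := by
    apply ContinuousOn.mul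
    · apply ContinuousOn.div
      · exact ((continuousOn_const.div hpx (fun τ hτ => (hp0 _ (hxU τ hτ)).ne')).mul hyc).add
          (hxc.mul (continuousOn_const.div hqy (fun τ hτ => (hq0 _ (hyV τ hτ)).ne')))
      · exact continuousOn_const.mul hrc
      · intro τ hτ; have := hr0 τ hτ; simp only [hr] at this; positivity
    · exact ((hrc.pow 2).neg.div_const 2).rexp
  have hae : (fun τ => ENNReal.ofReal √(P * Q)) =ᵐ[volume.restrict (Ioo (0:ℝ) 1)] fun τ => ENNReal.ofReal (h τ) := by
    apply ae_eq_of_ae_le_of_lintegral_le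
    · filter_upwards [ae_restrict_mem measurableSet_Ioo] with τ hτ
      exact ENNReal.ofReal_le_ofReal (hpw τ hτ).1
    · simp
    · exact (hhc.aemeasurable measurableSet_Ioo).ennreal_ofReal
    · rw [hInt, hconst]
  have hae2 : (fun τ => √(P * Q)) =ᵐ[volume.restrict (Ioo (0:ℝ) 1)] h := by
    filter_upwards [hae, ae_restrict_mem measurableSet_Ioo] with τ h1 hτ
    exact (ENNReal.ofReal_eq_ofReal_iff (Real.sqrt_nonneg _) ((Real.sqrt_nonneg _).trans (hpw τ hτ).1)).1 h1
  have hev : EqOn (fun τ => √(P * Q)) h (Ioo 0 1) :=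
    Measure.eqOn_open_of_ae_eq hae2 isOpen_Ioo continuousOn_const hhc
  have hkey := fun τ (hτ : τ ∈ Ioo (0:ℝ) 1) => (hpw τ hτ).2 (hev hτ).symm
  -- ratio constant
  have hrat : ∀ τ ∈ Ioo (0:ℝ) 1, y τ / x τ = y (1/2) / x (1/2) := by
    intro τ hτ
    have hd : ∀ τ ∈ Ioo (0:ℝ) 1, HasDerivAt (fun τ => y τ / x τ) 0 τ := by
      intro τ hτ
      have := (hyd τ hτ).div (hxd τ hτ) (hx0 τ hτ).ne'
      have h1 := (hkey τ hτ).1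
      have h2 : (Q / q (y τ) * x τ - y τ * (P / p (x τ))) / x τ ^ 2 = 0 := by
        rw [div_eq_zero_iff]; left
        linarith
      rw [h2] at this
      exact this
    exact isOpen_Ioo.is_const_of_deriv_eq_zero isPreconnected_Ioo
      (fun u hu => (hd u hu).differentiableAt.differentiableWithinAt) (fun u hu => (hd u hu).deriv) hτ (by norm_num)
  set l := y (1/2) / x (1/2) with hl
  have hl0 : 0 < l := div_pos (hy0 _ (by norm_num)) (hx0 _ (by norm_num))
  have hyx : ∀ τ ∈ Ioo (0:ℝ) 1, y τ = l * x τ := fun τ hτ => by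
    rw [← hrat τ hτ, div_mul_cancel₀ _ (hx0 τ hτ).ne']
  have hVU : ∀ s ∈ U, l * s ∈ V ∧ p s * q (l * s) = Real.exp (-(l * s ^ 2)) := by
    intro s hs
    obtain ⟨τ, hτ, rfl⟩ := hxs s hs
    rw [← hyx τ hτ]
    refine ⟨hyV τ hτ, ?_⟩
    rw [(hkey τ hτ).2, hyx τ hτ]; congr 1; ring
  have hrx : ∀ τ ∈ Ioo (0:ℝ) 1, r τ = √l * x τ := by
    intro τ hτ
    simp only [hr]
    rw [hyx τ hτ, show x τ * (l * x τ) = l * x τ ^ 2 by ring, Real.sqrt_mul hl0.le, Real.sqrt_sq (hx0 τ hτ).le]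
  have hUfull : U = Ioi 0 := by
    apply full_of_null U hUc hUpos
    intro J hJ hJ0 hJU
    have hsl : 0 < √l := Real.sqrt_pos.2 hl0
    set J' : Set ℝ := (fun u => (√l)⁻¹ * u) ⁻¹' J with hJ'
    have hJ'o : IsOpen J' := hJ.preimage (by fun_prop)
    have hdisj : Disjoint (r '' Ioo 0 1) J' := by
      rw [disjoint_left]
      rintro _ ⟨τ, hτ, rfl⟩ h2
      rw [hrx τ hτ] at h2
      simp only [hJ', mem_preimage] at h2
      rw [inv_mul_cancel_left₀ hsl.ne'] at h2
      exact disjoint_left.1 hJU h2 (hxU τ hτ)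
    have hJ'0 : J' ⊆ Ioi 0 := by
      intro u hu
      have := hJ0 hu
      simp only [mem_Ioi] at this ⊢
      exact (pos_iff_pos_of_mul_pos this).1 (inv_pos.2 hsl)
    have h1 : ∫⁻ u in r '' Ioo 0 1 ∪ J', w u ≤ ENNReal.ofReal √(Real.pi / 2) := by
      rw [← hw2]; exact lintegral_mono_set (union_subset hsub hJ'0)
    rw [lintegral_union hJ'o.measurableSet hdisj, hcv', hInt, heq] at h1
    have h2 : ∫⁻ u in J', w u = 0 := by
      by_contra hne
      exact absurd h1 (not_le.2 (ENNReal.lt_add_right ENNReal.ofReal_ne_top hne))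
    have hwm : Measurable w := by fun_prop
    rw [lintegral_eq_zero_iff hwm] at h2
    have h3 : volume J' = 0 := by
      have h4 : ∀ᵐ u ∂(volume.restrict J'), False := by
        filter_upwards [h2] with u hu
        simp only [hw, Pi.zero_apply, ENNReal.ofReal_eq_zero] at hu
        exact absurd hu (not_le.2 (Real.exp_pos _))
      have := ae_iff.1 h4
      simpa using this
    have h5 := (hJ'o.measure_eq_zero_iff volume).1 h3
    rw [eq_empty_iff_forall_notMem] at h5 ⊢
    intro u hu
    apply h5 (√l * u)
    simp only [hJ', mem_preimage]
    rwa [inv_mul_cancel_left₀ hsl.ne']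
  have hVfull : V = Ioi 0 := by
    apply Subset.antisymm hVpos
    intro t ht
    have : l⁻¹ * t ∈ U := by rw [hUfull]; exact mul_pos (inv_pos.2 hl0) ht
    have := (hVU _ this).1
    rwa [mul_inv_cancel_left₀ hl0.ne'] at this
  refine ⟨hUfull, hVfull, l, p 1 * Real.exp (l / 2), hl0, ?_, ?_⟩
  · exact mul_pos (hp0 1 (by rw [hUfull]; simp)) (Real.exp_pos _)
  have hone : (1:ℝ) ∈ U := by rw [hUfull]; simp
  have hle : ∀ s ∈ U, ∀ t ∈ U, Real.log (p s) - Real.log (p t) ≤ - l * t * (s - t) := by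
    intro s hs t ht
    have h1 := hpq s hs _ (hVU t ht).1
    have h2 := (hVU t ht).2
    have hqp : 0 < q (l * t) := hq0 _ (hVU t ht).1
    have h3 := Real.log_le_log (mul_pos (hp0 s hs) hqp) h1
    have h4 := congrArg Real.log h2
    rw [Real.log_mul (hp0 s hs).ne' hqp.ne', Real.log_exp] at h3
    rw [Real.log_mul (hp0 t ht).ne' hqp.ne', Real.log_exp] at h4
    nlinarith
  have hconstU := const_of_quad U hU hUc (fun s => Real.log (p s) + l / 2 * s ^ 2) (l / 2) (by
    intro s hs t ht
    have h1 := hle s hs t ht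
    have h2 := hle t ht s hs
    rw [abs_le]; constructor <;> nlinarith)
  have hps : ∀ s ∈ Ioi (0:ℝ), p s = p 1 * Real.exp (l / 2) * Real.exp (-(l / 2 * s ^ 2)) := by
    intro s hs
    rw [← hUfull] at hs
    have h1 := hconstU s hs 1 hone
    rw [← Real.exp_log (hp0 s hs), ← Real.exp_log (hp0 1 hone), ← Real.exp_add, ← Real.exp_add]
    congr 1; linarith
  refine ⟨hps, ?_⟩
  intro t ht
  have ht' : l⁻¹ * t ∈ Ioi (0:ℝ) := mul_pos (inv_pos.2 hl0) ht
  have h1 := (hVU (l⁻¹ * t) (by rwa [hUfull])).2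
  rw [mul_inv_cancel_left₀ hl0.ne', hps _ ht'] at h1
  have hc : 0 < p 1 * Real.exp (l / 2) := mul_pos (hp0 1 hone) (Real.exp_pos _)
  set c := p 1 * Real.exp (l / 2)
  have h2 : q t = c⁻¹ * (Real.exp (-(l * (l⁻¹ * t)^2)) * (Real.exp (-(l / 2 * (l⁻¹ * t)^2)))⁻¹) := by
    rw [← h1]
    have := Real.exp_pos (-(l / 2 * (l⁻¹ * t)^2))
    field_simp
  rw [h2, ← Real.exp_neg, ← Real.exp_add]
  congr 2
  field_simp; ring


lemma dual_exists (S : Set ℝ) (hS : S.Nonempty) (a : ℝ → ℝ) :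
    ∃ (U : Set ℝ) (ψ : ℝ → ℝ), IsOpen U ∧ Convex ℝ U ∧ U ⊆ Ioi 0 ∧ ConcaveOn ℝ U ψ ∧
      (∀ s ∈ S, ∀ t ∈ U, ψ t ≤ a s - s * t) ∧
      ∀ g : ℝ → ENNReal, (∀ s ∈ S, ∀ t ∈ Ioi (0:ℝ), ENNReal.ofReal (Real.exp (-a s)) * g t ≤
        ENNReal.ofReal (Real.exp (-(s * t)))) →
        ∀ᵐ t ∂(volume.restrict (Ioi (0:ℝ))), g t ≤ U.indicator (fun t => ENNReal.ofReal (Real.exp (ψ t))) t := by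
  set D : Set ℝ := {t | 0 < t ∧ BddBelow ((fun s => a s - s * t) '' S)} with hD
  set ψ : ℝ → ℝ := fun t => sInf ((fun s => a s - s * t) '' S) with hψ
  have hle : ∀ t ∈ D, ∀ s ∈ S, ψ t ≤ a s - s * t := fun t ht s hs => csInf_le ht.2 ⟨s, hs, rfl⟩
  have hge : ∀ t c, (∀ s ∈ S, c ≤ a s - s * t) → c ≤ ψ t := by
    intro t c hc
    apply le_csInf (hS.image _)
    rintro _ ⟨s, hs, rfl⟩; exact hc s hs
  have hDc : Convex ℝ D := by
    intro t ht u hu α β hα hβ hαβ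
    refine ⟨?_, ?_⟩
    · exact convex_Ioi (0:ℝ) ht.1 hu.1 hα hβ hαβ
    · refine ⟨α * ψ t + β * ψ u, ?_⟩
      rintro _ ⟨s, hs, rfl⟩
      have h1 := mul_le_mul_of_nonneg_left (hle t ht s hs) hα
      have h2 := mul_le_mul_of_nonneg_left (hle u hu s hs) hβ
      have h3 : a s = α * a s + β * a s := by rw [← add_mul, hαβ, one_mul]
      simp only [smul_eq_mul]
      rw [h3]; linarith
  have hψc : ConcaveOn ℝ D ψ := by
    refine ⟨hDc, ?_⟩
    intro t ht u hu α β hα hβ hαβ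
    apply hge
    intro s hs
    have h1 := mul_le_mul_of_nonneg_left (hle t ht s hs) hα
    have h2 := mul_le_mul_of_nonneg_left (hle u hu s hs) hβ
    have h3 : a s = α * a s + β * a s := by rw [← add_mul, hαβ, one_mul]
    simp only [smul_eq_mul]
    rw [h3]; linarith
  refine ⟨interior D, ψ, isOpen_interior, hDc.interior, fun t ht => (interior_subset ht).1,
    hψc.subset interior_subset hDc.interior, fun s hs t ht => hle t (interior_subset ht) s hs, ?_⟩
  intro g hg
  have hfr : ∀ᵐ t ∂(volume : Measure ℝ), t ∉ frontier D :=
    measure_eq_zero_iff_ae_notMem.1 (hDc.addHaar_frontier volume)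
  filter_upwards [ae_restrict_mem measurableSet_Ioi, ae_restrict_of_ae hfr] with t ht htf
  by_cases hgt : g t = 0
  · rw [hgt]; exact zero_le
  have hgle : ∀ s ∈ S, g t ≤ ENNReal.ofReal (Real.exp (a s - s * t)) := by
    intro s hs
    have h1 := hg s hs t ht
    calc g t = ENNReal.ofReal (Real.exp (a s)) * (ENNReal.ofReal (Real.exp (-a s)) * g t) := by
          rw [← mul_assoc, ← ENNReal.ofReal_mul (Real.exp_pos _).le, ← Real.exp_add]; simp
      _ ≤ ENNReal.ofReal (Real.exp (a s)) * ENNReal.ofReal (Real.exp (-(s * t))) := by gcongr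
      _ = _ := by rw [← ENNReal.ofReal_mul (Real.exp_pos _).le, ← Real.exp_add]; rfl
  have hfin : g t ≠ ⊤ := by
    obtain ⟨s, hs⟩ := hS
    exact ((hgle s hs).trans_lt ENNReal.ofReal_lt_top).ne
  have hpos : 0 < (g t).toReal := ENNReal.toReal_pos hgt hfin
  have hlog : ∀ s ∈ S, Real.log (g t).toReal ≤ a s - s * t := by
    intro s hs
    rw [Real.log_le_iff_le_exp hpos]
    exact ENNReal.toReal_le_of_le_ofReal (Real.exp_pos _).le (hgle s hs)
  have htD : t ∈ D := ⟨ht, Real.log (g t).toReal, by rintro _ ⟨s, hs, rfl⟩; exact hlog s hs⟩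
  have htI : t ∈ interior D := by
    by_contra h
    exact htf ⟨subset_closure htD, h⟩
  rw [indicator_of_mem htI]
  rw [← ENNReal.ofReal_toReal hfin]
  apply ENNReal.ofReal_le_ofReal
  rw [← Real.log_le_iff_le_exp hpos]
  exact hge t _ hlog

lemma intOn_exp (U : Set ℝ) (hU : IsOpen U) (hUpos : U ⊆ Ioi 0) (ψ : ℝ → ℝ) (hc : ContinuousOn ψ U)
    (c t : ℝ) (ht : 0 < t) (h : ∀ s ∈ U, ψ s ≤ c - t * s) : IntegrableOn (fun s => Real.exp (ψ s)) U := by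
  have h1 : IntegrableOn (fun s : ℝ => Real.exp c * Real.exp (-t * s)) U :=
    ((integrableOn_exp_mul_Ioi (by linarith : -t < 0) 0).mono_set hUpos).const_mul _
  refine Integrable.mono' h1 (hc.rexp.aestronglyMeasurable hU.measurableSet) ?_
  filter_upwards [ae_restrict_mem hU.measurableSet] with s hs
  rw [Real.norm_eq_abs, abs_of_pos (Real.exp_pos _), ← Real.exp_add]
  exact Real.exp_le_exp.2 (by linarith [h s hs])

/-- One dimensional multiplicative Prékopa–Leindler on the half line, with equality case. -/
lemma half_line (f g : ℝ → ENNReal)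
    (hfg : ∀ s ∈ Ioi (0:ℝ), ∀ t ∈ Ioi (0:ℝ), f s * g t ≤ ENNReal.ofReal (Real.exp (-(s * t)))) :
    (∫⁻ s in Ioi (0:ℝ), f s) * (∫⁻ t in Ioi (0:ℝ), g t) ≤ ENNReal.ofReal (Real.pi / 2) ∧
    ((∫⁻ s in Ioi (0:ℝ), f s) * (∫⁻ t in Ioi (0:ℝ), g t) = ENNReal.ofReal (Real.pi / 2) →
      ∃ l c : ℝ, 0 < l ∧ 0 < c ∧
       (∀ᵐ s ∂(volume.restrict (Ioi (0:ℝ))), f s = ENNReal.ofReal (c * Real.exp (-(l / 2 * s ^ 2)))) ∧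
        ∀ᵐ t ∂(volume.restrict (Ioi (0:ℝ))), g t = ENNReal.ofReal (c⁻¹ * Real.exp (-(1 / (2 * l) * t ^ 2)))) := by
  have hpi2 : 0 < Real.pi / 2 := by positivity
  have hpine : ENNReal.ofReal (Real.pi / 2) ≠ 0 := by simpa using hpi2
  by_cases hf0 : ∫⁻ s in Ioi (0:ℝ), f s = 0
  · rw [hf0, zero_mul]; exact ⟨zero_le, fun h => absurd h.symm hpine⟩
  by_cases hg0 : ∫⁻ s in Ioi (0:ℝ), g s = 0
  · rw [hg0, mul_zero]; exact ⟨zero_le, fun h => absurd h.symm hpine⟩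
  have hex : ∀ k : ℝ → ENNReal, ∫⁻ s in Ioi (0:ℝ), k s ≠ 0 → ∃ s ∈ Ioi (0:ℝ), k s ≠ 0 := by
    intro k hk
    by_contra! h
    exact hk (by rw [setLIntegral_congr_fun measurableSet_Ioi h]; simp)
  obtain ⟨t0, ht0, hgt0⟩ := hex g hg0
  have hffin : ∀ s ∈ Ioi (0:ℝ), f s ≠ ⊤ := by
    intro s hs h
    have := hfg s hs t0 ht0
    rw [h, ENNReal.top_mul hgt0] at this
    exact absurd this (by simp)
  set S : Set ℝ := {s | s ∈ Ioi (0:ℝ) ∧ f s ≠ 0} with hS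
  have hSne : S.Nonempty := by obtain ⟨s, hs, h⟩ := hex f hf0; exact ⟨s, hs, h⟩
  have hexpS : ∀ s ∈ S, ENNReal.ofReal (Real.exp (-(-Real.log (f s).toReal))) = f s := by
    intro s hs
    rw [neg_neg, Real.exp_log (ENNReal.toReal_pos hs.2 (hffin s hs.1)), ENNReal.ofReal_toReal (hffin s hs.1)]
  obtain ⟨U, ψ, hU, hUc, hUpos, hψ, hψle, hUg⟩ := dual_exists S hSne (fun s => -Real.log (f s).toReal)
  have hgU := hUg g (fun s hs t ht => by rw [hexpS s hs]; exact hfg s hs.1 t ht)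
  have hne : ∀ (k : ℝ → ENNReal) (U : Set ℝ) (ψ : ℝ → ℝ), ∫⁻ s in Ioi (0:ℝ), k s ≠ 0 →
     (∀ᵐ t ∂(volume.restrict (Ioi (0:ℝ))), k t ≤ U.indicator (fun t => ENNReal.ofReal (Real.exp (ψ t))) t) → U.Nonempty := by
    intro k U ψ hk h
    by_contra hUe
    rw [not_nonempty_iff_eq_empty] at hUe
    apply hk
    have := lintegral_mono_ae h
    rw [hUe] at this
    simpa using this
  have hUne : U.Nonempty := hne g U ψ hg0 hgU
  obtain ⟨W, χ, hW, hWc, hWpos, hχ, hχle, hWf⟩ := dual_exists U hUne (fun t => -ψ t)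
  have hfW := hWf f (fun t ht s hs => by
    rw [neg_neg]
    by_cases hfs : f s = 0
    · rw [hfs, mul_zero]; exact zero_le
    · have h1 := hψle s ⟨hs, hfs⟩ t ht
      rw [← hexpS s ⟨hs, hfs⟩, ← ENNReal.ofReal_mul (Real.exp_pos _).le, ← Real.exp_add]
      apply ENNReal.ofReal_le_ofReal
      apply Real.exp_le_exp.2
      linarith)
  have hWne : W.Nonempty := hne f W χ hf0 hfW
  have hχc : ContinuousOn χ W := hχ.continuousOn hW
  have hψc : ContinuousOn ψ U := hψ.continuousOn hU
  have hpi : IntegrableOn (fun s => Real.exp (χ s)) W := by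
    obtain ⟨t, ht⟩ := hUne
    exact intOn_exp W hW hWpos χ hχc (-ψ t) t (hUpos ht) (fun s hs => hχle t ht s hs)
  have hqi : IntegrableOn (fun s => Real.exp (ψ s)) U := by
    obtain ⟨s, hs⟩ := hWne
    refine intOn_exp U hU hUpos ψ hψc (-χ s) s (hWpos hs) (fun t ht => ?_)
    linarith [hχle t ht s hs]
  have hcore := core_1d W U hW hWc hWne hWpos hU hUc hUne hUpos (fun s => Real.exp (χ s)) (fun s => Real.exp (ψ s))
    hχc.rexp (fun s _ => Real.exp_pos _) hpi hψc.rexp (fun s _ => Real.exp_pos _) hqi (fun s hs t ht => by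
      rw [← Real.exp_add]; apply Real.exp_le_exp.2; linarith [hχle t ht s hs])
  have hI : ∀ (W : Set ℝ) (χ : ℝ → ℝ), IsOpen W → W ⊆ Ioi 0 → IntegrableOn (fun s => Real.exp (χ s)) W →
      ∫⁻ s in Ioi (0:ℝ), W.indicator (fun t => ENNReal.ofReal (Real.exp (χ t))) s = ENNReal.ofReal (∫ s in W, Real.exp (χ s)) := by
    intro W χ hW hWpos hi
    rw [setLIntegral_indicator hW.measurableSet, inter_eq_left.2 hWpos, ofReal_integral_eq_lintegral_ofReal hi]
    exact Eventually.of_forall fun _ => (Real.exp_pos _).le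
  have hfle : ∫⁻ s in Ioi (0:ℝ), f s ≤ ENNReal.ofReal (∫ s in W, Real.exp (χ s)) := by
    rw [← hI W χ hW hWpos hpi]; exact lintegral_mono_ae hfW
  have hgle : ∫⁻ s in Ioi (0:ℝ), g s ≤ ENNReal.ofReal (∫ s in U, Real.exp (ψ s)) := by
    rw [← hI U ψ hU hUpos hqi]; exact lintegral_mono_ae hgU
  set P := ∫ s in W, Real.exp (χ s) with hP
  set Q := ∫ s in U, Real.exp (ψ s) with hQ
  have hP0 : 0 ≤ P := integral_nonneg fun _ => (Real.exp_pos _).le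
  have hQ0 : 0 ≤ Q := integral_nonneg fun _ => (Real.exp_pos _).le
  have hPQ : ENNReal.ofReal P * ENNReal.ofReal Q ≤ ENNReal.ofReal (Real.pi / 2) := by
    rw [← ENNReal.ofReal_mul hP0]; exact ENNReal.ofReal_le_ofReal hcore.1
  refine ⟨(mul_le_mul' hfle hgle).trans hPQ, ?_⟩
  intro heq
  have hPf : ENNReal.ofReal P ≤ ∫⁻ s in Ioi (0:ℝ), f s := by
    by_contra! hlt
    have : (∫⁻ s in Ioi (0:ℝ), f s) * (∫⁻ t in Ioi (0:ℝ), g t) < ENNReal.ofReal P * ∫⁻ t in Ioi (0:ℝ), g t :=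
      ENNReal.mul_lt_mul_left hg0 (hgle.trans_lt ENNReal.ofReal_lt_top).ne hlt
    rw [heq] at this
    exact absurd (this.trans_le ((mul_le_mul' le_rfl hgle).trans hPQ)) (lt_irrefl _)
  have hQg : ENNReal.ofReal Q ≤ ∫⁻ s in Ioi (0:ℝ), g s := by
    by_contra! hlt
    have : (∫⁻ s in Ioi (0:ℝ), f s) * (∫⁻ t in Ioi (0:ℝ), g t) < (∫⁻ t in Ioi (0:ℝ), f t) * ENNReal.ofReal Q :=
      ENNReal.mul_lt_mul_right hf0 (hfle.trans_lt ENNReal.ofReal_lt_top).ne hlt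
    rw [heq] at this
    exact absurd (this.trans_le ((mul_le_mul' hfle le_rfl).trans hPQ)) (lt_irrefl _)
  have hPQe : P * Q = Real.pi / 2 := by
    apply le_antisymm hcore.1
    rw [← ENNReal.ofReal_le_ofReal_iff (mul_nonneg hP0 hQ0), ENNReal.ofReal_mul hP0, ← heq]
    exact mul_le_mul' hfle hgle
  obtain ⟨hWf', hUf', l, c, hl, hc, hpe, hqe⟩ := hcore.2 hPQe
  have hmeas : ∀ (W : Set ℝ) (χ : ℝ → ℝ), IsOpen W → ContinuousOn χ W → AEMeasurable
      (W.indicator (fun t => ENNReal.ofReal (Real.exp (χ t)))) (volume.restrict (Ioi (0:ℝ))) := by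
    intro W χ hW hc
    apply AEMeasurable.restrict
    rw [aemeasurable_indicator_iff hW.measurableSet]
    exact (hc.rexp.aemeasurable hW.measurableSet).ennreal_ofReal
  have haef := ae_eq_of_ae_le_of_lintegral_le hfW (hfle.trans_lt ENNReal.ofReal_lt_top).ne (hmeas W χ hW hχc)
    (by rw [hI W χ hW hWpos hpi]; exact hPf)
  have haeg := ae_eq_of_ae_le_of_lintegral_le hgU (hgle.trans_lt ENNReal.ofReal_lt_top).ne (hmeas U ψ hU hψc)
    (by rw [hI U ψ hU hUpos hqi]; exact hQg)
  refine ⟨l, c, hl, hc, ?_, ?_⟩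
  · filter_upwards [haef, ae_restrict_mem measurableSet_Ioi] with s h1 hs
    rw [h1, indicator_of_mem (by rw [hWf']; exact hs), ← hpe s hs]
  · filter_upwards [haeg, ae_restrict_mem measurableSet_Ioi] with s h1 hs
    rw [h1, indicator_of_mem (by rw [hUf']; exact hs), ← hqe s hs]


lemma ae_Ioi_le (h : ℝ → ℝ) (hc : Continuous h) (hae : ∀ᵐ s ∂(volume.restrict (Ioi (0:ℝ))), h s ≤ 0) :
    ∀ s, 0 ≤ s → h s ≤ 0 := by
  have h1 : (fun s => max (h s) 0) =ᵐ[volume.restrict (Ioi (0:ℝ))] fun _ => (0:ℝ) := by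
    filter_upwards [hae] with s hs
    exact max_eq_right hs
  have h2 := Measure.eqOn_open_of_ae_eq h1 isOpen_Ioi (by fun_prop) continuousOn_const
  have h3 : closure (Ioi (0:ℝ)) ⊆ {s | h s ≤ 0} := by
    apply closure_minimal
    · intro s hs
      exact max_eq_right_iff.1 (h2 hs)
    · exact isClosed_le hc continuous_const
  rw [closure_Ioi] at h3
  exact fun s hs => h3 hs

lemma ae_all_le {E : Type*} [TopologicalSpace E] [MeasureSpace E]
    [(volume : Measure E).IsOpenPosMeasure] (h : E → ℝ) (hc : Continuous h)
    (hae : ∀ᵐ s : E, h s ≤ 0) : ∀ s, h s ≤ 0 := by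
  have h1 : (fun s => max (h s) 0) =ᵐ[volume] fun _ => (0:ℝ) := by
    filter_upwards [hae] with s hs
    exact max_eq_right hs
  have h2 := Measure.eq_of_ae_eq h1 (by fun_prop) continuous_const
  intro s
  exact max_eq_right_iff.1 (congrFun h2 s)

lemma gauss_cross (g f : ℝ → ENNReal) (l1 c1 l2 c2 K σ : ℝ) (hc1 : 0 < c1) (hc2 : 0 < c2)
    (hg : ∀ᵐ s ∂(volume.restrict (Ioi (0:ℝ))), g s = ENNReal.ofReal (c1 * Real.exp (-(l1 / 2 * s ^ 2))))
    (hf : ∀ᵐ s ∂(volume.restrict (Ioi (0:ℝ))), f s = ENNReal.ofReal (c2 * Real.exp (-(1 / (2 * l2) * s ^ 2))))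
    (h : ∀ s ∈ Ioi (0:ℝ), ∀ t ∈ Ioi (0:ℝ), g s * f t ≤ ENNReal.ofReal (Real.exp (-(K + σ * (s * t))))) :
    ∀ s, 0 ≤ s → ∀ t, 0 ≤ t →
      c1 * Real.exp (-(l1 / 2 * s ^ 2)) * (c2 * Real.exp (-(1 / (2 * l2) * t ^ 2))) ≤ Real.exp (-(K + σ * (s * t))) := by
  have h1 : ∀ t, 0 ≤ t → ∀ᵐ s ∂(volume.restrict (Ioi (0:ℝ))),
      c1 * Real.exp (-(l1 / 2 * s ^ 2)) * (c2 * Real.exp (-(1 / (2 * l2) * t ^ 2))) - Real.exp (-(K + σ * (s * t))) ≤ 0 := by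
    intro t ht
    filter_upwards [hg, ae_restrict_mem measurableSet_Ioi] with s hs hs0
    revert t
    apply ae_Ioi_le
    · fun_prop
    filter_upwards [hf, ae_restrict_mem measurableSet_Ioi] with t ht ht0
    have := h s hs0 t ht0
    rw [hs, ht, ← ENNReal.ofReal_mul (by positivity), ENNReal.ofReal_le_ofReal_iff (Real.exp_pos _).le] at this
    linarith
  intro s hs t ht
  have := ae_Ioi_le _ (by fun_prop) (h1 t ht) s hs
  linarith

lemma lam_le (g f : ℝ → ENNReal) (l1 c1 l2 c2 K : ℝ) (hc1 : 0 < c1) (hc2 : 0 < c2)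
    (hl1 : 0 < l1) (hl2 : 0 < l2)
    (hg : ∀ᵐ s ∂(volume.restrict (Ioi (0:ℝ))), g s = ENNReal.ofReal (c1 * Real.exp (-(l1 / 2 * s ^ 2))))
    (hf : ∀ᵐ s ∂(volume.restrict (Ioi (0:ℝ))), f s = ENNReal.ofReal (c2 * Real.exp (-(1 / (2 * l2) * s ^ 2))))
    (h : ∀ s ∈ Ioi (0:ℝ), ∀ t ∈ Ioi (0:ℝ), g s * f t ≤ ENNReal.ofReal (Real.exp (-(K + 1 * (s * t))))) :
    l2 ≤ l1 := by
  by_contra! hlt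
  have hx := gauss_cross g f l1 c1 l2 c2 K 1 hc1 hc2 hg hf h
  have hk : 0 < l1 / 2 * (1 - l1 / l2) := by
    have : l1 / l2 < 1 := (div_lt_one hl2).2 hlt
    have : 0 < 1 - l1 / l2 := by linarith
    positivity
  set k := l1 / 2 * (1 - l1 / l2) with hkdef
  set M := |Real.log (c1 * c2) + K| + 1 with hM
  have hM0 : 0 < M := by positivity
  have hs := hx √(M / k) (Real.sqrt_nonneg _) (l1 * √(M / k)) (by positivity)
  have hsq : √(M / k) ^ 2 = M / k := Real.sq_sqrt (by positivity)
  have h2 : c1 * c2 = Real.exp (Real.log (c1 * c2)) := (Real.exp_log (by positivity)).symm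
  rw [show ∀ A B : ℝ, c1 * A * (c2 * B) = c1 * c2 * (A * B) by intros; ring, h2, ← Real.exp_add, ← Real.exp_add,
    Real.exp_le_exp] at hs
  have h3 : l1 * √(M/k)^2 - l1 / 2 * √(M/k) ^2 - 1 / (2 * l2) * (l1 * √(M/k))^2 = M := by
    rw [mul_pow, hsq]
    calc _ = k * (M / k) := by rw [hkdef]; field_simp; ring
      _ = M := by field_simp
  have h4 := neg_abs_le (Real.log (c1 * c2) + K)
  nlinarith

section
variable {E : Type*} [NormedAddCommGroup E] [NormedSpace ℝ E] [MeasureSpace E]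

def GaussPair (B : E →ₗ[ℝ] E →ₗ[ℝ] ℝ) (f g : E → ENNReal) : Prop :=
  ∃ (L Q : E ≃ₗ[ℝ] E) (C : ℝ), 0 < C ∧ (∀ x y, B x (Q y) = B (L x) (L y)) ∧
    (∀ᵐ x, f x = ENNReal.ofReal (C * Real.exp (-(B (L x) (L x) / 2)))) ∧
    ∀ᵐ x, g (Q x) = ENNReal.ofReal (C⁻¹ * Real.exp (-(B (L x) (L x) / 2)))

/-- functional Santaló inequality with equality case, as a proposition -/
def FS (B : E →ₗ[ℝ] E →ₗ[ℝ] ℝ) (d : ℕ) : Prop :=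
  ∀ f g : E → ENNReal, Measurable f → Measurable g →
    (∀ x y, f x * g y ≤ ENNReal.ofReal (Real.exp (-B x y))) → ∫⁻ x, f x ≠ ⊤ →
    Integrable (fun x : E => x) (volume.withDensity f) → ∫ x, x ∂(volume.withDensity f) = 0 →
    (∫⁻ x, f x) * (∫⁻ x, g x) ≤ ENNReal.ofReal ((2 * Real.pi) ^ d) ∧
    ((∫⁻ x, f x) * (∫⁻ x, g x) = ENNReal.ofReal ((2 * Real.pi) ^ d) → GaussPair B f g)

end

section
variable {E : Type*} [NormedAddCommGroup E] [NormedSpace ℝ E] [FiniteDimensional ℝ E] [MeasureSpace E]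
  [BorelSpace E] [(volume : Measure E).IsAddHaarMeasure]

lemma one_side (B : E →ₗ[ℝ] E →ₗ[ℝ] ℝ) (d : ℕ) (hFS : FS B d) (g f : ℝ × E → ENNReal)
    (hg : Measurable g) (hf : Measurable f)
    (hgf : ∀ s ∈ Ioi (0:ℝ), ∀ t ∈ Ioi (0:ℝ), ∀ x y, g (s, x) * f (t, y) ≤ ENNReal.ofReal (Real.exp (-(B x y + s * t))))
    (hfin : ∫⁻ x, ∫⁻ s in Ioi (0:ℝ), g (s, x) ≠ ⊤)
    (hInt : Integrable (fun x : E => x) (volume.withDensity (fun x => ∫⁻ s in Ioi (0:ℝ), g (s, x))))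
    (hbar : ∫ x, x ∂(volume.withDensity (fun x => ∫⁻ s in Ioi (0:ℝ), g (s, x))) = 0) :
    (∫⁻ x, ∫⁻ s in Ioi (0:ℝ), g (s, x)) * (∫⁻ x, ∫⁻ s in Ioi (0:ℝ), f (s, x)) ≤
      ENNReal.ofReal (Real.pi / 2 * (2 * Real.pi) ^ d) ∧
    ((∫⁻ x, ∫⁻ s in Ioi (0:ℝ), g (s, x)) * (∫⁻ x, ∫⁻ s in Ioi (0:ℝ), f (s, x)) =
      ENNReal.ofReal (Real.pi / 2 * (2 * Real.pi) ^ d) →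
      ∃ (L Q : E ≃ₗ[ℝ] E) (a l : ℝ), 0 < a ∧ 0 < l ∧ (∀ x y, B x (Q y) = B (L x) (L y)) ∧
      (∀ᵐ x, ∀ᵐ s ∂(volume.restrict (Ioi (0:ℝ))), g (s, x) =
        ENNReal.ofReal (a * Real.exp (-(B (L x) (L x) / 2)) * Real.exp (-(l / 2 * s ^ 2)))) ∧
      (∀ᵐ x, ∀ᵐ s ∂(volume.restrict (Ioi (0:ℝ))), f (s, Q x) =
        ENNReal.ofReal (a⁻¹ * Real.exp (-(B (L x) (L x) / 2)) * Real.exp (-(1 / (2 * l) * s ^ 2))))) := by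
  set G : E → ENNReal := fun x => ∫⁻ s in Ioi (0:ℝ), g (s, x) with hG
  set F : E → ENNReal := fun x => ∫⁻ s in Ioi (0:ℝ), f (s, x) with hF
  have hpi2 : 0 < Real.pi / 2 := by positivity
  have hGm : Measurable G := hg.lintegral_prod_left'
  have hFm : Measurable F := hf.lintegral_prod_left'
  set κ : ENNReal := ENNReal.ofReal (Real.pi / 2)⁻¹ with hκ
  have hκ1 : ENNReal.ofReal (Real.pi / 2) * κ = 1 := by
    rw [hκ, ← ENNReal.ofReal_mul hpi2.le, mul_inv_cancel₀ hpi2.ne', ENNReal.ofReal_one]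
  have hline : ∀ x y, ∀ s ∈ Ioi (0:ℝ), ∀ t ∈ Ioi (0:ℝ),
      (ENNReal.ofReal (Real.exp (B x y)) * g (s, x)) * f (t, y) ≤ ENNReal.ofReal (Real.exp (-(s * t))) := by
    intro x y s hs t ht
    rw [mul_assoc]
    calc _ ≤ ENNReal.ofReal (Real.exp (B x y)) * ENNReal.ofReal (Real.exp (-(B x y + s * t))) := by
          gcongr; exact hgf s hs t ht x y
      _ = _ := by
        rw [← ENNReal.ofReal_mul (Real.exp_pos _).le, ← Real.exp_add]; congr 2; ring
  have hI : ∀ x y, ∫⁻ s in Ioi (0:ℝ), ENNReal.ofReal (Real.exp (B x y)) * g (s, x) = ENNReal.ofReal (Real.exp (B x y)) * G x := by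
    intro x y
    rw [lintegral_const_mul']; exact ENNReal.ofReal_ne_top
  have hpair : ∀ x y, G x * F y ≤ ENNReal.ofReal (Real.pi / 2) * ENNReal.ofReal (Real.exp (-B x y)) := by
    intro x y
    have h1 := (half_line _ _ (hline x y)).1
    rw [hI] at h1
    calc G x * F y = ENNReal.ofReal (Real.exp (-B x y)) * (ENNReal.ofReal (Real.exp (B x y)) * G x * F y) := by
          rw [← mul_assoc, ← mul_assoc, ← ENNReal.ofReal_mul (Real.exp_pos _).le, ← Real.exp_add]; simp
      _ ≤ ENNReal.ofReal (Real.exp (-B x y)) * ENNReal.ofReal (Real.pi / 2) := by gcongr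
      _ = _ := mul_comm _ _
  have hfs := hFS G (fun y => κ * F y) hGm (hFm.const_mul _) (by
    intro x y
    calc G x * (κ * F y) = κ * (G x * F y) := by ring
      _ ≤ κ * (ENNReal.ofReal (Real.pi / 2) * ENNReal.ofReal (Real.exp (-B x y))) := mul_le_mul' le_rfl (hpair x y)
      _ = _ := by rw [← mul_assoc, mul_comm κ, hκ1, one_mul]) hfin hInt hbar
  have hIF : ∫⁻ y, κ * F y = κ * ∫⁻ y, F y := lintegral_const_mul _ hFm
  rw [hIF] at hfs
  have hre : ∀ z : ENNReal, ENNReal.ofReal (Real.pi / 2) * (κ * z) = z := by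
    intro z; rw [← mul_assoc, hκ1, one_mul]
  have hre2 : (∫⁻ x, G x) * (∫⁻ x, F x) = ENNReal.ofReal (Real.pi / 2) * ((∫⁻ x, G x) * (κ * ∫⁻ x, F x)) := by
    rw [show (∫⁻ x, G x) * (κ * ∫⁻ x, F x) = κ * ((∫⁻ x, G x) * ∫⁻ x, F x) by ring, hre]
  refine ⟨?_, ?_⟩
  · rw [hre2, ENNReal.ofReal_mul hpi2.le]
    gcongr; exact hfs.1
  intro heq
  rw [hre2, ENNReal.ofReal_mul hpi2.le] at heq
  have heq' := (ENNReal.mul_right_inj (by simpa using hpi2) ENNReal.ofReal_ne_top).1 heq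
  obtain ⟨L, Q, C, hC, hLQ, hGe, hFe⟩ := hfs.2 heq'
  have hgood : ∀ᵐ x, ∃ l c : ℝ, 0 < l ∧ 0 < c ∧
      (∀ᵐ s ∂(volume.restrict (Ioi (0:ℝ))), ENNReal.ofReal (Real.exp (B x (Q x))) * g (s, x) =
        ENNReal.ofReal (c * Real.exp (-(l / 2 * s ^ 2)))) ∧
      (∀ᵐ t ∂(volume.restrict (Ioi (0:ℝ))), f (t, Q x) = ENNReal.ofReal (c⁻¹ * Real.exp (-(1 / (2 * l) * t ^ 2)))) ∧
      G x = ENNReal.ofReal (C * Real.exp (-(B (L x) (L x) / 2))) := by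
    filter_upwards [hGe, hFe] with x h1 h2
    obtain ⟨l, c, h3⟩ := (half_line _ _ (hline x (Q x))).2 (by
      rw [hI]
      have : F (Q x) = ENNReal.ofReal (Real.pi / 2) * ENNReal.ofReal (C⁻¹ * Real.exp (-(B (L x) (L x) / 2))) := by
        rw [← h2, hre]
      change _ * F (Q x) = _
      rw [this, h1, hLQ, ← ENNReal.ofReal_mul (by positivity), ← ENNReal.ofReal_mul (by positivity),
        ← ENNReal.ofReal_mul (by positivity)]
      congr 1
      have e1 : Real.exp (B (L x) (L x)) * (Real.exp (-(B (L x) (L x) / 2)) * Real.exp (-(B (L x) (L x) / 2))) = 1 := by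
        rw [← Real.exp_add, ← Real.exp_add, ← Real.exp_zero]; congr 1; ring
      calc _ = (Real.exp (B (L x) (L x)) * (Real.exp (-(B (L x) (L x) / 2)) * Real.exp (-(B (L x) (L x) / 2)))) * (C * C⁻¹) * (Real.pi / 2) := by ring
        _ = _ := by rw [e1, mul_inv_cancel₀ hC.ne']; ring)
    exact ⟨l, c, h3.1, h3.2.1, h3.2.2.1, h3.2.2.2, h1⟩
  have hcmp : ∀ x1 x2 l1 c1 l2 c2, 0 < l1 → 0 < c1 → 0 < l2 → 0 < c2 →
      (∀ᵐ s ∂(volume.restrict (Ioi (0:ℝ))), ENNReal.ofReal (Real.exp (B x1 (Q x1))) * g (s, x1) =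
        ENNReal.ofReal (c1 * Real.exp (-(l1 / 2 * s ^ 2)))) →
      (∀ᵐ t ∂(volume.restrict (Ioi (0:ℝ))), f (t, Q x2) = ENNReal.ofReal (c2⁻¹ * Real.exp (-(1 / (2 * l2) * t ^ 2)))) →
      l2 ≤ l1 := by
    intro x1 x2 l1 c1 l2 c2 hl1 hc1 hl2 hc2 h1 h2
    refine lam_le _ _ l1 c1 l2 c2⁻¹ (B x1 (Q x2) - B x1 (Q x1)) hc1 (inv_pos.2 hc2) hl1 hl2 h1 h2 ?_
    intro s hs t ht
    rw [mul_assoc]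
    calc _ ≤ ENNReal.ofReal (Real.exp (B x1 (Q x1))) * ENNReal.ofReal (Real.exp (-(B x1 (Q x2) + s * t))) := by
          gcongr; exact hgf s hs t ht x1 (Q x2)
      _ = _ := by
        rw [← ENNReal.ofReal_mul (Real.exp_pos _).le, ← Real.exp_add]; congr 2; ring
  obtain ⟨x0, l0, c0, hl0, hc0, hg0, hf0, hG0⟩ := hgood.exists
  set k := √(Real.pi / (l0 / 2)) / 2 with hk
  have hk0 : 0 < k := by have := Real.pi_pos; positivity
  have hgood2 : ∀ᵐ x, 
      (∀ᵐ s ∂(volume.restrict (Ioi (0:ℝ))), g (s, x) =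
        ENNReal.ofReal (C / k * Real.exp (-(B (L x) (L x) / 2)) * Real.exp (-(l0 / 2 * s ^ 2)))) ∧
      (∀ᵐ s ∂(volume.restrict (Ioi (0:ℝ))), f (s, Q x) =
        ENNReal.ofReal ((C / k)⁻¹ * Real.exp (-(B (L x) (L x) / 2)) * Real.exp (-(1 / (2 * l0) * s ^ 2)))) := by
    filter_upwards [hgood] with x hx
    obtain ⟨l, c, hl, hc, hgx, hfx, hGx⟩ := hx
    have hll : l = l0 := le_antisymm (hcmp x0 x l0 c0 l c hl0 hc0 hl hc hg0 hfx)
      (hcmp x x0 l c l0 c0 hl hc hl0 hc0 hgx hf0)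
    subst hll
    have h1 : ENNReal.ofReal (Real.exp (B x (Q x))) * G x = ENNReal.ofReal (c * k) := by
      rw [← hI, lintegral_congr_ae hgx]
      simp_rw [ENNReal.ofReal_mul hc.le]
      rw [lintegral_const_mul' _ _ ENNReal.ofReal_ne_top, lint_gauss_half _ (by positivity)]
    rw [hGx, ← ENNReal.ofReal_mul (by positivity), ENNReal.ofReal_eq_ofReal_iff (by positivity) (by positivity), hLQ] at h1
    set q := B (L x) (L x) with hq
    have hcq : c = C / k * Real.exp (q / 2) := by
      have e1 : Real.exp q * Real.exp (-(q / 2)) = Real.exp (q / 2) := by rw [← Real.exp_add]; congr 1; ring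
      have : c = C * (Real.exp q * Real.exp (-(q / 2))) / k := by
        rw [eq_div_iff hk0.ne', ← h1]; ring
      rw [this, e1]; ring
    constructor
    · filter_upwards [hgx] with s hs
      have : g (s, x) = ENNReal.ofReal (Real.exp (-q)) * (ENNReal.ofReal (Real.exp (B x (Q x))) * g (s, x)) := by
        rw [← mul_assoc, ← ENNReal.ofReal_mul (Real.exp_pos _).le, ← Real.exp_add, hLQ]; simp [hq]
      rw [this, hs, ← ENNReal.ofReal_mul (Real.exp_pos _).le, hcq]
      congr 1
      have e1 : Real.exp (-q) * Real.exp (q / 2) = Real.exp (-(q / 2)) := by rw [← Real.exp_add]; congr 1; ring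
      rw [← e1]; ring
    · filter_upwards [hfx] with s hs
      rw [hs, hcq, mul_inv, Real.exp_neg (q/2)]
  exact ⟨L, Q, C / k, l0, by positivity, hl0, hLQ, hgood2.mono fun x h => h.1, hgood2.mono fun x h => h.2⟩
end


lemma restrict_Iio_map : (volume.restrict (Iio (0:ℝ))) = (volume.restrict (Ioi (0:ℝ))).map (fun s => -s) := by
  have h : MeasurePreserving (fun s : ℝ => -s) volume volume := Measure.measurePreserving_neg _
  have := (h.restrict_preimage (measurableSet_Iio (a := (0:ℝ)))).map_eq
  rw [← this]
  congr 2
  ext s; simp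

lemma lint_split (h : ℝ → ENNReal) : ∫⁻ s, h s = (∫⁻ s in Ioi (0:ℝ), h s) + ∫⁻ s in Ioi (0:ℝ), h (-s) := by
  have e : ∫⁻ s in Ioi (0:ℝ), h (-s) = ∫⁻ s in Iio (0:ℝ), h s := by
    rw [restrict_Iio_map]
    exact (lintegral_map_equiv h (MeasurableEquiv.neg ℝ)).symm
  rw [e, ← lintegral_add_compl h (measurableSet_Ioi (a := (0:ℝ))), compl_Ioi, restrict_Iio_eq_restrict_Iic]

lemma ae_split (q : ℝ → Prop) (h1 : ∀ᵐ s ∂(volume.restrict (Ioi (0:ℝ))), q s)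
    (h2 : ∀ᵐ s ∂(volume.restrict (Ioi (0:ℝ))), q (-s)) : ∀ᵐ s, q s := by
  have h3 : ∀ᵐ s ∂(volume.restrict (Iio (0:ℝ))), q s := by
    rw [restrict_Iio_map]
    have := (MeasurableEquiv.neg ℝ).measurableEmbedding.ae_map_iff (p := q) (μ := volume.restrict (Ioi (0:ℝ)))
    exact this.2 h2
  rw [restrict_Iio_eq_restrict_Iic] at h3
  rw [ae_restrict_iff' measurableSet_Ioi] at h1
  rw [ae_restrict_iff' measurableSet_Iic] at h3
  filter_upwards [h1, h3] with s a b
  rcases le_or_gt s 0 with h | h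
  · exact b h
  · exact a h

section
variable {E : Type*} [NormedAddCommGroup E] [NormedSpace ℝ E]

/-- product form on ℝ × E -/
def prodForm (B : E →ₗ[ℝ] E →ₗ[ℝ] ℝ) : (ℝ × E) →ₗ[ℝ] (ℝ × E) →ₗ[ℝ] ℝ :=
  LinearMap.mk₂ ℝ (fun p q => p.1 * q.1 + B p.2 q.2)
    (by intros; simp; ring) (by intros; simp; ring) (by intros; simp; ring) (by intros; simp; ring)

@[simp] lemma prodForm_apply (B : E →ₗ[ℝ] E →ₗ[ℝ] ℝ) (p q : ℝ × E) :
    prodForm B p q = p.1 * q.1 + B p.2 q.2 := rfl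

variable [FiniteDimensional ℝ E]

lemma contB (B : E →ₗ[ℝ] E →ₗ[ℝ] ℝ) : Continuous (fun p : E × E => B p.1 p.2) := by
  let T : E →L[ℝ] (E →L[ℝ] ℝ) := LinearMap.toContinuousLinearMap
    ((LinearMap.toContinuousLinearMap : (E →ₗ[ℝ] ℝ) ≃ₗ[ℝ] (E →L[ℝ] ℝ)).toLinearMap ∘ₗ B)
  have : Continuous (fun p : E × E => T p.1 p.2) := by fun_prop
  exact this

lemma contBL {X : Type*} [TopologicalSpace X] (B : E →ₗ[ℝ] E →ₗ[ℝ] ℝ) (u v : X → E)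
    (hu : Continuous u) (hv : Continuous v) : Continuous (fun x => B (u x) (v x)) :=
  (contB B).comp (hu.prodMk hv)

lemma contL (L : E ≃ₗ[ℝ] E) : Continuous L := L.toLinearMap.continuous_of_finiteDimensional

variable [MeasureSpace E] [BorelSpace E] [(volume : Measure E).IsAddHaarMeasure]

lemma lint_prod_split (g : ℝ × E → ENNReal) (hg : Measurable g) :
    ∫⁻ z, g z = (∫⁻ x, ∫⁻ s in Ioi (0:ℝ), g (s, x)) + ∫⁻ x, ∫⁻ s in Ioi (0:ℝ), g (-s, x) := by
  rw [Measure.volume_eq_prod, lintegral_prod_symm' _ hg, ← lintegral_add_left hg.lintegral_prod_left']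
  congr 1; ext x
  exact lint_split (fun s => g (s, x))

lemma ae_prod_split (q : ℝ × E → Prop) (hq : MeasurableSet {z | q z})
    (h1 : ∀ᵐ x : E, ∀ᵐ s ∂(volume.restrict (Ioi (0:ℝ))), q (s, x))
    (h2 : ∀ᵐ x : E, ∀ᵐ s ∂(volume.restrict (Ioi (0:ℝ))), q (-s, x)) : ∀ᵐ z, q z := by
  rw [Measure.volume_eq_prod, Measure.ae_prod_iff_ae_ae hq]
  rw [Measure.ae_ae_comm (p := fun s x => q (s, x)) hq]
  filter_upwards [h1, h2] with x a b
  exact ae_split _ a b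

lemma cross_le (B : E →ₗ[ℝ] E →ₗ[ℝ] ℝ) (g f : ℝ × E → ENNReal)
    (hgf : ∀ s ∈ Ioi (0:ℝ), ∀ t ∈ Ioi (0:ℝ), ∀ x y,
      g (s, x) * f (t, y) ≤ ENNReal.ofReal (Real.exp (-(B x y + (-1) * (s * t)))))
    (L L' Q' : E ≃ₗ[ℝ] E) (a l a' l' : ℝ) (ha : 0 < a) (ha' : 0 < a')
    (hLQ' : ∀ x y, B x (Q' y) = B (L' x) (L' y))
    (hg : ∀ᵐ x, ∀ᵐ s ∂(volume.restrict (Ioi (0:ℝ))), g (s, x) =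
        ENNReal.ofReal (a * Real.exp (-(B (L x) (L x) / 2)) * Real.exp (-(l / 2 * s ^ 2))))
    (hf : ∀ᵐ x, ∀ᵐ s ∂(volume.restrict (Ioi (0:ℝ))), f (s, Q' x) =
        ENNReal.ofReal (a'⁻¹ * Real.exp (-(B (L' x) (L' x) / 2)) * Real.exp (-(1 / (2 * l') * s ^ 2)))) :
    ∀ x, a * Real.exp (-(B (L x) (L x) / 2)) ≤ a' * Real.exp (-(B (L' x) (L' x) / 2)) := by
  have h1 : ∀ x y, (a * Real.exp (-(B (L x) (L x) / 2))) * (a'⁻¹ * Real.exp (-(B (L' y) (L' y) / 2)))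
      - Real.exp (-(B x (Q' y))) ≤ 0 := by
    intro x y
    revert x
    have hL := contL L
    have hL' := contL L'
    have hQ' := contL Q'
    have c1 := contBL B _ _ hL hL
    have c2 := contBL B _ _ hL' hL'
    apply ae_all_le
    · have key : ∀ φ ψ : E → ℝ, Continuous φ → Continuous ψ → Continuous (fun s => a * Real.exp (-(φ s / 2)) *
          (a'⁻¹ * Real.exp (-(B (L' y) (L' y) / 2))) - Real.exp (-(ψ s))) := by
        intro φ ψ _ _; fun_prop
      exact key _ _ c1 (contBL B (fun x : E => x) (fun _ => Q' y) continuous_id continuous_const)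
    filter_upwards [hg] with x hx
    revert y
    apply ae_all_le
    · have key : ∀ φ ψ : E → ℝ, Continuous φ → Continuous ψ → Continuous (fun s => a * Real.exp (-(B (L x) (L x) / 2)) *
          (a'⁻¹ * Real.exp (-(φ s / 2))) - Real.exp (-(ψ s))) := by
        intro φ ψ _ _; fun_prop
      exact key _ _ c2 (contBL B (fun _ : E => x) (fun y => Q' y) continuous_const hQ')
    filter_upwards [hf] with y hy
    have := gauss_cross _ _ l _ l' _ (B x (Q' y)) (-1) (by positivity) (by positivity) hx hy
      (fun s hs t ht => hgf s hs t ht x (Q' y)) 0 le_rfl 0 le_rfl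
    simp at this ⊢
    exact this
  intro x
  have h2 := h1 x x
  rw [hLQ'] at h2
  set q := B (L' x) (L' x)
  have e : Real.exp (-q) = Real.exp (-(q/2)) * Real.exp (-(q/2)) := by
    rw [← Real.exp_add]; congr 1; ring
  rw [e] at h2
  have hp := Real.exp_pos (-(q/2))
  have h3 : (a * Real.exp (-(B (L x) (L x) / 2))) * a'⁻¹ * Real.exp (-(q/2)) ≤ Real.exp (-(q/2)) * Real.exp (-(q/2)) := by
    linarith
  have h4 := le_of_mul_le_mul_right h3 hp
  rw [← div_eq_mul_inv, div_le_iff₀ ha'] at h4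
  linarith

lemma two_side (B : E →ₗ[ℝ] E →ₗ[ℝ] ℝ) (hsym : ∀ x y, B x y = B y x) (hpos : ∀ x, x ≠ 0 → 0 < B x x)
    (d : ℕ) (hFS : FS B d) (g f : ℝ × E → ENNReal)
    (hg : Measurable g) (hf : Measurable f)
    (hgf : ∀ p q, g p * f q ≤ ENNReal.ofReal (Real.exp (-(prodForm B p q))))
    (hfin : ∫⁻ x, ∫⁻ s in Ioi (0:ℝ), g (s, x) ≠ ⊤)
    (hhalf : ∫⁻ x, ∫⁻ s in Ioi (0:ℝ), g (-s, x) = ∫⁻ x, ∫⁻ s in Ioi (0:ℝ), g (s, x))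
    (hInt : Integrable (fun x : E => x) (volume.withDensity (fun x => ∫⁻ s in Ioi (0:ℝ), g (s, x))))
    (hbar : ∫ x, x ∂(volume.withDensity (fun x => ∫⁻ s in Ioi (0:ℝ), g (s, x))) = 0)
    (hInt' : Integrable (fun x : E => x) (volume.withDensity (fun x => ∫⁻ s in Ioi (0:ℝ), g (-s, x))))
    (hbar' : ∫ x, x ∂(volume.withDensity (fun x => ∫⁻ s in Ioi (0:ℝ), g (-s, x))) = 0) :
    (∫⁻ z, g z) * (∫⁻ z, f z) ≤ ENNReal.ofReal ((2 * Real.pi) ^ (d + 1)) ∧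
    ((∫⁻ z, g z) * (∫⁻ z, f z) = ENNReal.ofReal ((2 * Real.pi) ^ (d + 1)) →
      GaussPair (prodForm B) g f) := by
  have hneg : Measurable (fun z : ℝ × E => ((-z.1, z.2) : ℝ × E)) := by fun_prop
  have h1 := one_side B d hFS g f hg hf (by
    intro s _ t _ x y
    have := hgf (s, x) (t, y)
    rwa [prodForm_apply, add_comm] at this) hfin hInt hbar
  have h2 := one_side B d hFS (fun z => g (-z.1, z.2)) (fun z => f (-z.1, z.2)) (hg.comp hneg) (hf.comp hneg) (by
    intro s _ t _ x y
    have := hgf (-s, x) (-t, y)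
    rw [prodForm_apply, add_comm] at this
    simpa using this) (by rw [hhalf]; exact hfin) hInt' hbar'
  simp only at h2
  rw [lint_prod_split g hg, lint_prod_split f hf]
  rw [hhalf] at h2 ⊢
  set m := ∫⁻ x, ∫⁻ s in Ioi (0:ℝ), g (s, x) with hm
  set F1 := ∫⁻ x, ∫⁻ s in Ioi (0:ℝ), f (s, x)
  set F2 := ∫⁻ x, ∫⁻ s in Ioi (0:ℝ), f (-s, x)
  set P := ENNReal.ofReal (Real.pi / 2 * (2 * Real.pi) ^ d) with hP
  have hPpos : 0 < P := by
    rw [hP]; simp only [ENNReal.ofReal_pos]; have := Real.pi_pos; positivity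
  have hPtop : P ≠ ⊤ := ENNReal.ofReal_ne_top
  have e1 : ENNReal.ofReal ((2 * Real.pi) ^ (d + 1)) = 2 * (P + P) := by
    rw [hP, ← two_mul, ← mul_assoc]
    rw [show (2 * 2 : ENNReal) = ENNReal.ofReal 4 by norm_num, ← ENNReal.ofReal_mul (by norm_num)]
    congr 1; ring
  have e2 : (m + m) * (F1 + F2) = 2 * (m * F1 + m * F2) := by ring
  rw [e1, e2]
  refine ⟨mul_le_mul' le_rfl (add_le_add h1.1 h2.1), ?_⟩
  intro heq
  have heq2 := (ENNReal.mul_right_inj (by norm_num) (by norm_num)).1 heq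
  have q1 : m * F1 = P := by
    refine le_antisymm h1.1 ?_
    by_contra! hlt
    have := ENNReal.add_lt_add_of_lt_of_le (ne_top_of_le_ne_top hPtop h2.1) hlt h2.1
    exact absurd heq2 this.ne
  have q2 : m * F2 = P := by
    refine le_antisymm h2.1 ?_
    by_contra! hlt
    have := ENNReal.add_lt_add_of_le_of_lt (ne_top_of_le_ne_top hPtop h1.1) h1.1 hlt
    exact absurd heq2 this.ne
  have hm0 : m ≠ 0 := by rintro h; rw [h, zero_mul] at q1; exact hPpos.ne q1
  obtain ⟨L, Q, a, l, ha, hl, hLQ, hga, hfa⟩ := h1.2 q1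
  obtain ⟨L', Q', a', l', ha', hl', hLQ', hga', hfa'⟩ := h2.2 q2
  have c1 := cross_le B g (fun z => f (-z.1, z.2)) (by
    intro s _ t _ x y
    have := hgf (s, x) (-t, y)
    rw [prodForm_apply, add_comm] at this
    simpa using this) L L' Q' a l a' l' ha ha' hLQ' hga hfa'
  have c2 := cross_le B (fun z => g (-z.1, z.2)) f (by
    intro s _ t _ x y
    have := hgf (-s, x) (t, y)
    rw [prodForm_apply, add_comm] at this
    simpa using this) L' L Q a' l' a l ha' ha hLQ hga' hfa
  have hexp : ∀ x, a * Real.exp (-(B (L x) (L x) / 2)) = a' * Real.exp (-(B (L' x) (L' x) / 2)) :=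
    fun x => le_antisymm (c1 x) (c2 x)
  have haa : a = a' := by simpa using hexp 0
  subst haa
  have hB : ∀ x, B (L x) (L x) = B (L' x) (L' x) := by
    intro x
    have := mul_left_cancel₀ ha.ne' (hexp x)
    rw [Real.exp_eq_exp] at this
    linarith
  have hpol : ∀ x y, B (L x) (L y) = B (L' x) (L' y) := by
    intro x y
    have h := hB (x + y)
    simp only [map_add, LinearMap.add_apply] at h
    rw [hB x, hB y, hsym (L y) (L x), hsym (L' y) (L' x)] at h
    linarith
  have hQ : ∀ y, Q y = Q' y := by
    intro y
    by_contra hne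
    have h := hpos (Q y - Q' y) (sub_ne_zero.2 hne)
    rw [map_sub (B (Q y - Q' y)), hLQ, hLQ', hpol, sub_self] at h
    exact lt_irrefl _ h
  have hL := contL L
  have hmass : ∀ (h : ℝ × E → ENNReal) (l : ℝ), 0 < l → (∀ᵐ x, ∀ᵐ s ∂(volume.restrict (Ioi (0:ℝ))), h (s, x) =
        ENNReal.ofReal (a * Real.exp (-(B (L x) (L x) / 2)) * Real.exp (-(l / 2 * s ^ 2)))) →
      ∫⁻ x, ∫⁻ s in Ioi (0:ℝ), h (s, x) =
        ENNReal.ofReal (√(Real.pi / (l / 2)) / 2) * ∫⁻ x, ENNReal.ofReal (a * Real.exp (-(B (L x) (L x) / 2))) := by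
    intro h l hl hh
    rw [← lintegral_const_mul' _ _ ENNReal.ofReal_ne_top]
    apply lintegral_congr_ae
    filter_upwards [hh] with x hx
    rw [lintegral_congr_ae hx]
    simp_rw [ENNReal.ofReal_mul (show 0 ≤ a * Real.exp (-(B (L x) (L x) / 2)) by positivity)]
    rw [lintegral_const_mul' _ _ ENNReal.ofReal_ne_top, lint_gauss_half _ (by positivity), mul_comm]
  have hga'' : ∀ᵐ x, ∀ᵐ s ∂(volume.restrict (Ioi (0:ℝ))), g (-s, x) =
        ENNReal.ofReal (a * Real.exp (-(B (L x) (L x) / 2)) * Real.exp (-(l' / 2 * s ^ 2))) := by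
    filter_upwards [hga'] with x hx
    rw [hB x]; exact hx
  have m1 := hmass g l hl hga
  have m2 := hmass (fun z => g (-z.1, z.2)) l' hl' hga''
  simp only at m2
  rw [hhalf] at m2
  rw [← hm] at m1
  have hll : l = l' := by
    set J := ∫⁻ x, ENNReal.ofReal (a * Real.exp (-(B (L x) (L x) / 2)))
    have hJ0 : J ≠ 0 := by rintro h; rw [h, mul_zero] at m1; exact hm0 m1
    have hk : 0 < √(Real.pi / (l / 2)) / 2 := by have := Real.pi_pos; positivity
    have hJt : J ≠ ⊤ := by
      rintro h
      rw [h, ENNReal.mul_top (by simpa using hk)] at m1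
      exact hfin m1
    have := (ENNReal.mul_left_inj hJ0 hJt).1 (m1.symm.trans m2)
    rw [ENNReal.ofReal_eq_ofReal_iff (by positivity) (by positivity)] at this
    have h3 : √(Real.pi / (l / 2)) = √(Real.pi / (l' / 2)) := by linarith
    have hpi := Real.pi_pos
    rw [Real.sqrt_inj (by positivity) (by positivity)] at h3
    field_simp at h3
    exact h3.symm
  subst hll
  have hfa'' : ∀ᵐ x, ∀ᵐ s ∂(volume.restrict (Ioi (0:ℝ))), f (-s, Q x) =
        ENNReal.ofReal (a⁻¹ * Real.exp (-(B (L x) (L x) / 2)) * Real.exp (-(1 / (2 * l) * s ^ 2))) := by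
    filter_upwards [hfa'] with x hx
    rw [hB x, hQ x]; exact hx
  have hsl : 0 < √l := Real.sqrt_pos.2 hl
  have hc := contBL B _ _ hL hL
  have hmeas : ∀ c : ℝ, Measurable (fun z : ℝ × E => c * Real.exp (-((√l * z.1 * (√l * z.1) + B (L z.2) (L z.2)) / 2))) := by
    intro c
    have key : ∀ φ : ℝ × E → ℝ, Measurable φ → Measurable (fun z : ℝ × E => c * Real.exp (-((√l * z.1 * (√l * z.1) + φ z) / 2))) := by
      intro φ _; fun_prop
    exact key _ (hc.measurable.comp measurable_snd)
  refine ⟨LinearEquiv.prodCongr (LinearEquiv.smulOfNeZero ℝ ℝ (√l) hsl.ne') L,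
    LinearEquiv.prodCongr (LinearEquiv.smulOfNeZero ℝ ℝ l hl.ne') Q, a, ha, ?_, ?_, ?_⟩
  · intro p q
    simp [hLQ]
    have := Real.mul_self_sqrt hl.le
    linear_combination (-(p.1 * q.1)) * this
  · refine ae_prod_split _ ?_ ?_ ?_
    · refine measurableSet_eq_fun hg ?_
      apply Measurable.ennreal_ofReal
      exact hmeas _
    · filter_upwards [hga] with x hx
      filter_upwards [hx] with s hs
      rw [hs, mul_assoc, ← Real.exp_add]
      congr 3
      simp
      linear_combination (s ^ 2 / 2) * (Real.mul_self_sqrt hl.le)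
    · filter_upwards [hga''] with x hx
      filter_upwards [hx] with s hs
      rw [hs, mul_assoc, ← Real.exp_add]
      congr 3
      simp
      linear_combination (s ^ 2 / 2) * (Real.mul_self_sqrt hl.le)
  · have hscale : ∀ p : ℝ → Prop, (∀ᵐ s ∂(volume.restrict (Ioi (0:ℝ))), p s) →
        ∀ᵐ s ∂(volume.restrict (Ioi (0:ℝ))), p (l * s) := by
      intro p hp
      rw [ae_restrict_iff' measurableSet_Ioi] at hp ⊢
      have : Measure.QuasiMeasurePreserving (fun s : ℝ => l * s) volume volume := by
        refine ⟨by fun_prop, ?_⟩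
        rw [Real.map_volume_mul_left hl.ne']
        exact Measure.smul_absolutelyContinuous
      filter_upwards [this.ae hp] with s hs h0
      exact hs (mul_pos hl h0)
    refine ae_prod_split _ ?_ ?_ ?_
    · refine measurableSet_eq_fun (hf.comp ?_) ?_
      · have := contL Q
        have h2 : Continuous fun z : ℝ × E => ((l * z.1, Q z.2) : ℝ × E) := by fun_prop
        exact h2.measurable
      apply Measurable.ennreal_ofReal
      exact hmeas _
    · filter_upwards [hfa] with x hx
      filter_upwards [hscale _ hx] with s hs
      simp only [LinearEquiv.prodCongr_apply, LinearEquiv.smulOfNeZero_apply, smul_eq_mul, prodForm_apply]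
      rw [hs, mul_assoc, ← Real.exp_add]
      congr 3
      have := Real.mul_self_sqrt hl.le
      field_simp
      linear_combination (s ^ 2) * (Real.mul_self_sqrt hl.le)
    · filter_upwards [hfa''] with x hx
      filter_upwards [hscale (fun s => f (-s, Q x) = ENNReal.ofReal (a⁻¹ * Real.exp (-(B (L x) (L x) / 2)) * Real.exp (-(1 / (2 * l) * s ^ 2)))) hx] with s hs
      simp only [LinearEquiv.prodCongr_apply, LinearEquiv.smulOfNeZero_apply, smul_eq_mul, prodForm_apply, mul_neg]
      rw [hs, mul_assoc, ← Real.exp_add]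
      congr 3
      have := Real.mul_self_sqrt hl.le
      field_simp
      linear_combination (s ^ 2) * (Real.mul_self_sqrt hl.le)
end


section
variable {E : Type*} [NormedAddCommGroup E] [NormedSpace ℝ E] [FiniteDimensional ℝ E] [MeasureSpace E]
  [BorelSpace E] [(volume : Measure E).IsAddHaarMeasure]

lemma null_hyperplane (φ : E →ₗ[ℝ] ℝ) (h : φ ≠ 0) : ∀ᵐ x : E, φ x ≠ 0 := by
  have h1 : (LinearMap.ker φ) ≠ ⊤ := by
    intro h2; exact h (LinearMap.ker_eq_top.1 h2)
  have h3 := Measure.addHaar_submodule (volume : Measure E) (LinearMap.ker φ) h1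
  rw [ae_iff]
  convert h3 using 2
  ext x; simp

lemma integral_lin (μ : Measure E) (φ : E →ₗ[ℝ] ℝ) (h : Integrable (fun x : E => x) μ) :
    Integrable (fun x => φ x) μ ∧ ∫ x, φ x ∂μ = φ (∫ x, x ∂μ) := by
  have := (LinearMap.toContinuousLinearMap φ).integral_comp_comm h
  exact ⟨(LinearMap.toContinuousLinearMap φ).integrable_comp h, this⟩

/-- a nonzero density with barycenter zero charges every open half space -/
lemma exists_pos_side (f : E → ENNReal) (hf : Measurable f) (hf0 : ∫⁻ x, f x ≠ 0)
    (hInt : Integrable (fun x : E => x) (volume.withDensity f)) (hbar : ∫ x, x ∂(volume.withDensity f) = 0)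
    (φ : E →ₗ[ℝ] ℝ) (h : φ ≠ 0) : ∃ x, f x ≠ 0 ∧ 0 < φ x := by
  by_contra! hc
  obtain ⟨h1, h2⟩ := integral_lin _ φ hInt
  rw [hbar, map_zero] at h2
  have hae : ∀ᵐ x ∂(volume.withDensity f), 0 ≤ -φ x := by
    rw [ae_withDensity_iff hf]
    refine ae_of_all _ fun x hx => ?_
    have := hc x hx
    linarith
  have h3 := (integral_eq_zero_iff_of_nonneg_ae hae h1.neg).1 (by
    rw [integral_neg, h2, neg_zero])
  have h4 : ∀ᵐ x ∂(volume.withDensity f), φ x = 0 := by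
    filter_upwards [h3] with x hx
    simpa using hx
  rw [ae_withDensity_iff hf] at h4
  apply hf0
  rw [lintegral_eq_zero_iff hf]
  filter_upwards [h4, null_hyperplane φ h] with x a b
  by_contra hne
  exact b (a hne)

lemma decay (B : E →ₗ[ℝ] E →ₗ[ℝ] ℝ) (hsym : ∀ x y, B x y = B y x) (hpos : ∀ x, x ≠ 0 → 0 < B x x)
    (f g : E → ENNReal) (hf : Measurable f) (hf0 : ∫⁻ x, f x ≠ 0)
    (hInt : Integrable (fun x : E => x) (volume.withDensity f)) (hbar : ∫ x, x ∂(volume.withDensity f) = 0)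
    (hfg : ∀ x y, f x * g y ≤ ENNReal.ofReal (Real.exp (-B x y))) :
    ∃ (C : ENNReal) (δ : ℝ), C ≠ ⊤ ∧ 0 < δ ∧ ∀ y, g y ≤ C * ENNReal.ofReal (Real.exp (-(δ * ‖y‖))) := by
  have hbd : ∀ x y, f x ≠ 0 → g y ≤ (f x)⁻¹ * ENNReal.ofReal (Real.exp (-B x y)) := by
    intro x y hx
    rw [mul_comm, ← div_eq_mul_inv, ENNReal.le_div_iff_mul_le (Or.inl hx) (Or.inr ENNReal.ofReal_ne_top), mul_comm]
    exact hfg x y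
  have hK : IsCompact (Metric.sphere (0:E) 1) := isCompact_sphere _ _
  have hP : ∃ (C : ENNReal) (δ : ℝ), C ≠ ⊤ ∧ 0 < δ ∧ ∀ v ∈ Metric.sphere (0:E) 1, ∀ r : ℝ, 0 ≤ r →
      g (r • v) ≤ C * ENNReal.ofReal (Real.exp (-(δ * r))) := by
    apply hK.induction_on (p := fun s => ∃ (C : ENNReal) (δ : ℝ), C ≠ ⊤ ∧ 0 < δ ∧ ∀ v ∈ s, ∀ r : ℝ, 0 ≤ r →
      g (r • v) ≤ C * ENNReal.ofReal (Real.exp (-(δ * r))))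
    · exact ⟨1, 1, by simp, by simp, by simp⟩
    · rintro s t hst ⟨C, δ, h1, h2, h3⟩
      exact ⟨C, δ, h1, h2, fun v hv => h3 v (hst hv)⟩
    · rintro s t ⟨C, δ, h1, h2, h3⟩ ⟨C', δ', h1', h2', h3'⟩
      refine ⟨C + C', min δ δ', ENNReal.add_ne_top.2 ⟨h1, h1'⟩, lt_min h2 h2', ?_⟩
      rintro v (hv | hv) r hr
      · refine (h3 v hv r hr).trans (mul_le_mul' le_self_add (ENNReal.ofReal_le_ofReal (Real.exp_le_exp.2 ?_)))
        have := mul_le_mul_of_nonneg_right (min_le_left δ δ') hr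
        linarith
      · refine (h3' v hv r hr).trans (mul_le_mul' le_add_self (ENNReal.ofReal_le_ofReal (Real.exp_le_exp.2 ?_)))
        have := mul_le_mul_of_nonneg_right (min_le_right δ δ') hr
        linarith
    · intro u hu
      have hu0 : u ≠ 0 := by rintro rfl; simp at hu
      obtain ⟨x, hx0, hx⟩ := exists_pos_side f hf hf0 hInt hbar (B u) (by
        intro h; have := hpos u hu0; rw [h] at this; simp at this)
      rw [hsym] at hx
      refine ⟨{v | B x u / 2 < B x v}, ?_, (f x)⁻¹, B x u / 2, ?_, by linarith, ?_⟩
      · apply mem_nhdsWithin_of_mem_nhds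
        apply IsOpen.mem_nhds
        · exact isOpen_lt continuous_const (B x).continuous_of_finiteDimensional
        · simp; linarith
      · simpa using hx0
      · intro v hv r hr
        refine (hbd x _ hx0).trans (mul_le_mul' le_rfl (ENNReal.ofReal_le_ofReal (Real.exp_le_exp.2 ?_)))
        rw [map_smul, smul_eq_mul]
        have := mul_le_mul_of_nonneg_right (le_of_lt hv) hr
        linarith
  obtain ⟨C, δ, hC, hδ, h⟩ := hP
  obtain ⟨x, hx⟩ : ∃ x, f x ≠ 0 := by
    by_contra! hc
    exact hf0 (by simp [hc])
  refine ⟨C + (f x)⁻¹, δ, ENNReal.add_ne_top.2 ⟨hC, by simpa using hx⟩, hδ, ?_⟩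
  intro y
  by_cases hy : y = 0
  · subst hy
    have := hbd x 0 hx
    refine this.trans (mul_le_mul' le_add_self ?_)
    simp
  · have hn : ‖y‖ ≠ 0 := by simpa using hy
    have := h (‖y‖⁻¹ • y) (by simp [norm_smul, hn]) ‖y‖ (norm_nonneg _)
    rw [smul_smul, mul_inv_cancel₀ hn, one_smul] at this
    exact this.trans (mul_le_mul' le_self_add le_rfl)

lemma lint_exp_norm (δ : ℝ) (hδ : 0 < δ) :
    ∫⁻ y : E, ENNReal.ofReal ((1 + ‖y‖) * Real.exp (-(δ * ‖y‖))) ≠ ⊤ := by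
  set N := Module.finrank ℝ E + 1 with hN
  have h1 := integrable_one_add_norm (E := E) (μ := volume) (r := (N : ℝ)) (by rw [hN]; push_cast; linarith)
  set K : ℝ := (N + 1).factorial * Real.exp δ / δ ^ (N + 1) with hK
  have h2 := (h1.const_mul K).lintegral_lt_top
  refine ne_top_of_le_ne_top h2.ne (lintegral_mono fun y => ENNReal.ofReal_le_ofReal ?_)
  have hr : 0 < 1 + ‖y‖ := by positivity
  rw [Real.rpow_neg hr.le, Real.rpow_natCast, ← div_eq_mul_inv, le_div_iff₀ (by positivity)]
  have h3 := Real.pow_div_factorial_le_exp (δ * (1 + ‖y‖)) (by positivity) (N + 1)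
  rw [div_le_iff₀ (by positivity), mul_pow, mul_add, mul_one, Real.exp_add] at h3
  rw [hK, le_div_iff₀ (by positivity)]
  have e : Real.exp (δ * ‖y‖) * Real.exp (-(δ * ‖y‖)) = 1 := by rw [← Real.exp_add]; simp
  have h4 := mul_le_mul_of_nonneg_right h3 (Real.exp_pos (-(δ * ‖y‖))).le
  calc _ = δ ^ (N + 1) * (1 + ‖y‖) ^ (N + 1) * Real.exp (-(δ * ‖y‖)) := by ring
    _ ≤ _ := h4
    _ = ((N + 1).factorial : ℝ) * Real.exp δ * (Real.exp (δ * ‖y‖) * Real.exp (-(δ * ‖y‖))) := by ring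
    _ = _ := by rw [e, mul_one]

lemma moments_of_decay (g : E → ENNReal) (hg : Measurable g) (C : ENNReal) (δ : ℝ) (hC : C ≠ ⊤) (hδ : 0 < δ)
    (h : ∀ y, g y ≤ C * ENNReal.ofReal (Real.exp (-(δ * ‖y‖)))) :
    ∫⁻ x, g x ≠ ⊤ ∧ Integrable (fun x : E => x) (volume.withDensity g) := by
  have h1 := lint_exp_norm (E := E) δ hδ
  have h2 : ∫⁻ y : E, C * ENNReal.ofReal ((1 + ‖y‖) * Real.exp (-(δ * ‖y‖))) ≠ ⊤ := by
    rw [lintegral_const_mul' _ _ hC]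
    exact ENNReal.mul_ne_top hC h1
  constructor
  · refine ne_top_of_le_ne_top h2 (lintegral_mono fun y => (h y).trans ?_)
    refine mul_le_mul' le_rfl (ENNReal.ofReal_le_ofReal ?_)
    have := Real.exp_pos (-(δ * ‖y‖))
    nlinarith [norm_nonneg y]
  · refine ⟨measurable_id.aestronglyMeasurable, ?_⟩
    rw [HasFiniteIntegral, lintegral_withDensity_eq_lintegral_mul _ hg (by fun_prop)]
    refine lt_of_le_of_lt (lintegral_mono fun y => ?_) h2.lt_top
    simp only [Pi.mul_apply]
    calc g y * ‖y‖ₑ ≤ C * ENNReal.ofReal (Real.exp (-(δ * ‖y‖))) * ENNReal.ofReal ‖y‖ := by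
          rw [ofReal_norm]; exact mul_le_mul' (h y) le_rfl
      _ = C * ENNReal.ofReal (Real.exp (-(δ * ‖y‖)) * ‖y‖) := by
          rw [mul_assoc, ← ENNReal.ofReal_mul (Real.exp_pos _).le]
      _ ≤ _ := by
        refine mul_le_mul' le_rfl (ENNReal.ofReal_le_ofReal ?_)
        have := Real.exp_pos (-(δ * ‖y‖))
        nlinarith [norm_nonneg y]
end


lemma halve (k : ℝ → ENNReal) (hk : Measurable k) (h0 : ∫⁻ s, k s ≠ 0) (ht : ∫⁻ s, k s ≠ ⊤) :
    ∃ a, ∫⁻ s in Ioi a, k s = ∫⁻ s in Iio a, k s := by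
  set κ : ℝ → ℝ := fun s => (k s).toReal with hκ
  have hki : Integrable κ := integrable_toReal_of_lintegral_ne_top hk.aemeasurable ht
  have hfin : ∀ᵐ s, k s < ⊤ := ae_lt_top hk ht
  set M := ∫ s, κ s with hM
  have hMe : M = (∫⁻ s, k s).toReal := integral_toReal hk.aemeasurable hfin
  have hM0 : 0 < M := by rw [hMe]; exact ENNReal.toReal_pos h0 ht
  set R : ℝ → ℝ := fun s => ∫ u in Iic s, κ u with hR
  have hRc : Continuous R := by
    have h1 : R = fun t => R 0 + ∫ u in (0:ℝ)..t, κ u := by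
      funext t
      rw [← intervalIntegral.integral_Iic_sub_Iic hki.integrableOn hki.integrableOn]
      simp [hR]
    rw [h1]
    exact continuous_const.add (intervalIntegral.continuous_primitive (fun a b => hki.intervalIntegrable) 0)
  have hbot : Tendsto R atBot (𝓝 0) := by
    have := tendsto_setIntegral_of_antitone (μ := volume) (f := κ) (s := fun t : ℝᵒᵈ => Iic (OrderDual.ofDual t))
      (fun i => measurableSet_Iic) (fun a b hab => Iic_subset_Iic.2 hab) ⟨OrderDual.toDual 0, hki.integrableOn⟩
    have he : (⋂ n : ℝᵒᵈ, Iic (OrderDual.ofDual n)) = (∅ : Set ℝ) := by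
      ext t; simp only [mem_iInter, mem_Iic, mem_empty_iff_false, iff_false, not_forall, not_le]
      exact ⟨OrderDual.toDual (t-1), by simp⟩
    rw [he, setIntegral_empty] at this
    exact this
  have htop : Tendsto R atTop (𝓝 M) := by
    have := tendsto_setIntegral_of_monotone (μ := volume) (f := κ) (s := fun t : ℝ => Iic t)
      (fun i => measurableSet_Iic) (fun a b hab => Iic_subset_Iic.2 hab) hki.integrableOn
    have he : (⋃ n : ℝ, Iic n) = (univ : Set ℝ) := by
      ext t; simp only [mem_iUnion, mem_Iic, mem_univ, iff_true]; exact ⟨t, le_rfl⟩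
    rw [he, setIntegral_univ] at this
    exact this
  obtain ⟨a, ha⟩ : ∃ s, R s = M / 2 := by
    obtain ⟨a, ha⟩ := (hbot.eventually (gt_mem_nhds (show 0 < M / 2 by linarith))).exists
    obtain ⟨b, hb⟩ := (htop.eventually (lt_mem_nhds (show M / 2 < M by linarith))).exists
    exact mem_range_of_exists_le_of_exists_ge hRc ⟨a, ha.le⟩ ⟨b, hb.le⟩
  have h2 : (∫ s in Iic a, κ s) + ∫ s in Ioi a, κ s = M := by
    rw [← compl_Iic]; exact integral_add_compl measurableSet_Iic hki
  have ha' : ∫ s in Iic a, κ s = M / 2 := ha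
  have h3 : ∫ s in Ioi a, κ s = ∫ s in Iic a, κ s := by linarith
  refine ⟨a, ?_⟩
  rw [restrict_Iio_eq_restrict_Iic]
  have hf : ∀ S : Set ℝ, ∫⁻ s in S, k s ≠ ⊤ := fun S => ne_top_of_le_ne_top ht (setLIntegral_le_lintegral _ _)
  rw [← ENNReal.toReal_eq_toReal_iff' (hf _) (hf _)]
  rw [← integral_toReal hk.aemeasurable (ae_restrict_of_ae hfin), ← integral_toReal hk.aemeasurable (ae_restrict_of_ae hfin)]
  exact h3

section
variable {E : Type*} [NormedAddCommGroup E] [NormedSpace ℝ E] [FiniteDimensional ℝ E] [MeasureSpace E]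
  [BorelSpace E] [(volume : Measure E).IsAddHaarMeasure]

lemma ae_comp_equiv (L : E ≃ₗ[ℝ] E) (p : E → Prop) (h : ∀ᵐ x, p x) : ∀ᵐ x, p (L x) := by
  have := Measure.LinearMap.quasiMeasurePreserving (volume : Measure E) L.toLinearMap L.isUnit_det'.ne_zero
  exact this.ae h

lemma gauss_transfer (B : E →ₗ[ℝ] E →ₗ[ℝ] ℝ) (hsym : ∀ x y, B x y = B y x) (A T : E ≃ₗ[ℝ] E)
    (hAT : ∀ x y, B (A x) (T y) = B x y) (f g : E → ENNReal)
    (h : GaussPair B (fun x => g (A x)) (fun x => f (T x))) : GaussPair B f g := by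
  obtain ⟨L, Q, C, hC, hLQ, h1, h2⟩ := h
  refine ⟨T.symm.trans (Q.symm.trans L), T.symm.trans (Q.symm.trans A), C⁻¹, inv_pos.2 hC, ?_, ?_, ?_⟩
  · intro x y
    simp only [LinearEquiv.trans_apply]
    obtain ⟨p, rfl⟩ := T.surjective x
    obtain ⟨p, rfl⟩ := Q.surjective p
    simp only [LinearEquiv.symm_apply_apply]
    rw [hsym, hAT, hLQ, hsym]
  · have h3 := ae_comp_equiv (T.symm.trans Q.symm) _ h2
    filter_upwards [h3] with x hx
    simpa using hx
  · have h3 := ae_comp_equiv (T.symm.trans Q.symm) _ h1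
    filter_upwards [h3] with x hx
    simpa using hx

lemma jensen (f : E → ENNReal) (hf : Measurable f) (hf0 : ∫⁻ x, f x ≠ 0) (hft : ∫⁻ x, f x ≠ ⊤)
    (hInt : Integrable (fun x : E => x) (volume.withDensity f)) (hbar : ∫ x, x ∂(volume.withDensity f) = 0)
    (φ : E →ₗ[ℝ] ℝ) : ∫⁻ x, f x ≤ ∫⁻ x, f x * ENNReal.ofReal (Real.exp (φ x)) ∧
    (∫⁻ x, f x * ENNReal.ofReal (Real.exp (φ x)) ≤ ∫⁻ x, f x → φ = 0) := by
  have hφc : Continuous φ := φ.continuous_of_finiteDimensional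
  have hem : Measurable (fun x => ENNReal.ofReal (Real.exp (φ x))) := by
    have := hφc.measurable; fun_prop
  have hJ : ∫⁻ x, f x * ENNReal.ofReal (Real.exp (φ x)) = ∫⁻ x, ENNReal.ofReal (Real.exp (φ x)) ∂(volume.withDensity f) := by
    rw [lintegral_withDensity_eq_lintegral_mul _ hf hem]; rfl
  have hM : ∫⁻ x, f x = (volume.withDensity f) univ := by simp
  obtain ⟨h1, h2⟩ := integral_lin _ φ hInt
  rw [hbar, map_zero] at h2
  rw [hJ, hM]
  set ν := volume.withDensity f with hν
  have : IsFiniteMeasure ν := isFiniteMeasure_withDensity hft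
  have key : ∫⁻ x, ENNReal.ofReal (Real.exp (φ x)) ∂ν ≠ ⊤ → ∃ hi : Integrable (fun x => Real.exp (φ x) - 1 - φ x) ν,
      ∫⁻ x, ENNReal.ofReal (Real.exp (φ x)) ∂ν = ENNReal.ofReal (ν.real univ + ∫ x, (Real.exp (φ x) - 1 - φ x) ∂ν) := by
    intro hne
    have hei : Integrable (fun x => Real.exp (φ x)) ν := by
      refine ⟨(Real.continuous_exp.comp hφc).aestronglyMeasurable, ?_⟩
      rw [hasFiniteIntegral_iff_ofReal (ae_of_all _ fun x => (Real.exp_pos _).le)]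
      exact hne.lt_top
    have h1c : Integrable (fun _ : E => (1:ℝ)) ν := integrable_const _
    have h1d : Integrable (fun x => Real.exp (φ x) - 1) ν := hei.sub h1c
    refine ⟨h1d.sub h1, ?_⟩
    rw [integral_sub h1d h1, integral_sub hei h1c, h2,
      ← ofReal_integral_eq_lintegral_ofReal hei (ae_of_all _ fun x => (Real.exp_pos _).le)]
    simp
  have hnn : ∀ x, 0 ≤ Real.exp (φ x) - 1 - φ x := fun x => by
    have := Real.add_one_le_exp (φ x); linarith
  have hνr : ν univ = ENNReal.ofReal (ν.real univ) := by simp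
  constructor
  · by_cases hne : ∫⁻ x, ENNReal.ofReal (Real.exp (φ x)) ∂ν = ⊤
    · rw [hne]; exact le_top
    obtain ⟨hi, he⟩ := key hne
    rw [he, hνr]
    apply ENNReal.ofReal_le_ofReal
    have : 0 ≤ ∫ x, (Real.exp (φ x) - 1 - φ x) ∂ν := integral_nonneg hnn
    linarith
  · intro hle
    have hne : ∫⁻ x, ENNReal.ofReal (Real.exp (φ x)) ∂ν ≠ ⊤ := ne_top_of_le_ne_top (measure_ne_top _ _) hle
    obtain ⟨hi, he⟩ := key hne
    rw [he, hνr, ENNReal.ofReal_le_ofReal_iff measureReal_nonneg] at hle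
    have h0 : ∫ x, (Real.exp (φ x) - 1 - φ x) ∂ν = 0 :=
      le_antisymm (by linarith) (integral_nonneg hnn)
    have h3 := (integral_eq_zero_iff_of_nonneg hnn hi).1 h0
    have h4 : ∀ᵐ x ∂ν, φ x = 0 := by
      filter_upwards [h3] with x hx
      by_contra hx0
      have := Real.add_one_lt_exp hx0
      simp at hx
      linarith
    rw [hν, ae_withDensity_iff hf] at h4
    by_contra hφ
    apply hf0
    rw [lintegral_eq_zero_iff hf]
    filter_upwards [h4, null_hyperplane φ hφ] with x a b
    by_contra hne
    exact b (a hne)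

instance haar_prod : (volume : Measure (ℝ × E)).IsAddHaarMeasure := by
  rw [Measure.volume_eq_prod]; infer_instance

lemma lint_shear (h : ℝ × E → ENNReal) (hh : Measurable h) (a : ℝ) (z w : E) :
    ∫⁻ p : ℝ × E, h (a + p.1, z + p.2 + p.1 • w) = ∫⁻ p, h p := by
  rw [Measure.volume_eq_prod, lintegral_prod _ (by fun_prop), lintegral_prod _ hh.aemeasurable]
  have h1 : ∀ s : ℝ, ∫⁻ x : E, h (a + s, z + x + s • w) = ∫⁻ x, h (a + s, x) := by
    intro s
    have := lintegral_add_left_eq_self (μ := (volume : Measure E)) (fun x => h (a + s, x)) (z + s • w)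
    rw [← this]
    congr 1; ext x; congr 2; abel
  simp only [h1]
  exact lintegral_add_left_eq_self (μ := (volume : Measure ℝ)) (fun s => ∫⁻ x, h (s, x)) a

lemma lint_shear' (h : ℝ × E → ENNReal) (hh : Measurable h) (φ : E →ₗ[ℝ] ℝ) :
    ∫⁻ p : ℝ × E, h (p.1 - φ p.2, p.2) = ∫⁻ p, h p := by
  have hφ : Measurable φ := φ.continuous_of_finiteDimensional.measurable
  rw [Measure.volume_eq_prod, lintegral_prod_symm _ (by fun_prop), lintegral_prod_symm _ hh.aemeasurable]
  congr 1; ext y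
  exact lintegral_sub_right_eq_self (fun s => h (s, y)) (φ y)

lemma marginal_eq (g : ℝ × E → ENNReal) (hg : Measurable g) (a : ℝ) (z w : E) (I : Set ℝ) (hI : MeasurableSet I) :
    volume.withDensity (fun x => ∫⁻ s in I, g (a + s, z + x + s • w)) =
      ((volume.withDensity g).restrict {p | p.1 - a ∈ I}).map (fun p => p.2 - z - (p.1 - a) • w) := by
  have hm : Measurable (fun p : ℝ × E => p.2 - z - (p.1 - a) • w) := by fun_prop
  have hI' : MeasurableSet {p : ℝ × E | p.1 - a ∈ I} := by
    have : Measurable (fun p : ℝ × E => p.1 - a) := by fun_prop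
    exact this hI
  ext S hS
  rw [Measure.map_apply hm hS, Measure.restrict_apply (hm hS), withDensity_apply _ hS,
    withDensity_apply _ ((hm hS).inter hI'), ← lintegral_indicator ((hm hS).inter hI')]
  rw [← lint_shear _ (hg.indicator ((hm hS).inter hI')) a z w, Measure.volume_eq_prod, lintegral_prod_symm _ ?_,
    ← lintegral_indicator hS]
  · congr 1; ext x
    by_cases hx : x ∈ S
    · rw [indicator_of_mem hx, ← lintegral_indicator hI]
      congr 1; ext s
      by_cases hs : s ∈ I
      · rw [indicator_of_mem hs, indicator_of_mem]
        refine ⟨?_, ?_⟩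
        · simp; convert hx using 1; abel
        · simpa using hs
      · rw [indicator_of_notMem hs, indicator_of_notMem]
        rintro ⟨-, h⟩
        simp at h; exact hs h
    · rw [indicator_of_notMem hx]
      symm
      rw [lintegral_eq_zero_iff']
      · refine ae_of_all _ fun s => ?_
        apply indicator_of_notMem
        rintro ⟨h, -⟩
        apply hx
        simp at h; convert h using 1; abel
      · apply Measurable.aemeasurable
        apply (hg.indicator ((hm hS).inter hI')).comp
        fun_prop
  · apply Measurable.aemeasurable
    apply (hg.indicator ((hm hS).inter hI')).comp
    fun_prop
end


section
variable {E : Type*} [NormedAddCommGroup E] [NormedSpace ℝ E]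

lemma prodForm_sym (B : E →ₗ[ℝ] E →ₗ[ℝ] ℝ) (hsym : ∀ x y, B x y = B y x) (p q : ℝ × E) :
    prodForm B p q = prodForm B q p := by
  simp [hsym p.2 q.2, mul_comm]

lemma prodForm_pos (B : E →ₗ[ℝ] E →ₗ[ℝ] ℝ) (hpos : ∀ x, x ≠ 0 → 0 < B x x) (p : ℝ × E) (hp : p ≠ 0) :
    0 < prodForm B p p := by
  rw [prodForm_apply]
  by_cases h : p.2 = 0
  · have h1 : p.1 ≠ 0 := fun h1 => hp (Prod.ext h1 h)
    rw [h]; simp; exact h1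
  · have := hpos _ h
    nlinarith [mul_self_nonneg p.1]

/-- the linear shear (s,x) ↦ (s, x + s w) -/
def shearA (w : E) : (ℝ × E) ≃ₗ[ℝ] (ℝ × E) where
  toFun p := (p.1, p.2 + p.1 • w)
  invFun p := (p.1, p.2 - p.1 • w)
  map_add' p q := by ext <;> simp [add_smul]; abel
  map_smul' c p := by ext <;> simp [mul_smul]
  left_inv p := by simp
  right_inv p := by simp

/-- the dual shear (t,y) ↦ (t - B w y, y) -/
def shearT (B : E →ₗ[ℝ] E →ₗ[ℝ] ℝ) (w : E) : (ℝ × E) ≃ₗ[ℝ] (ℝ × E) where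
  toFun p := (p.1 - B w p.2, p.2)
  invFun p := (p.1 + B w p.2, p.2)
  map_add' p q := by ext <;> simp; ring
  map_smul' c p := by ext <;> simp; ring
  left_inv p := by simp
  right_inv p := by simp

lemma shear_dual (B : E →ₗ[ℝ] E →ₗ[ℝ] ℝ) (w : E) (p q : ℝ × E) :
    prodForm B (shearA w p) (shearT B w q) = prodForm B p q := by
  simp [shearA, shearT]; ring

variable [FiniteDimensional ℝ E] [MeasureSpace E]
  [BorelSpace E] [(volume : Measure E).IsAddHaarMeasure]

lemma balance (g : ℝ × E → ENNReal) (hg : Measurable g) (h0 : ∫⁻ p, g p ≠ 0) (ht : ∫⁻ p, g p ≠ ⊤)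
    (hInt : Integrable (fun p : ℝ × E => p) (volume.withDensity g)) :
    ∃ (a : ℝ) (z w : E),
      (volume.withDensity g) {p | p.1 - a ∈ Iio (0:ℝ)} = (volume.withDensity g) {p | p.1 - a ∈ Ioi (0:ℝ)} ∧
      ∫ p in {p : ℝ × E | p.1 - a ∈ Ioi (0:ℝ)}, (p.2 - z - (p.1 - a) • w) ∂(volume.withDensity g) = 0 ∧
      ∫ p in {p : ℝ × E | p.1 - a ∈ Iio (0:ℝ)}, (p.2 - z - (p.1 - a) • w) ∂(volume.withDensity g) = 0 := by
  set μ := volume.withDensity g with hμ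
  have hfinm : IsFiniteMeasure μ := isFiniteMeasure_withDensity ht
  have hk : Measurable (fun s : ℝ => ∫⁻ x : E, g (s, x)) := hg.lintegral_prod_right'
  have hktot : ∫⁻ s : ℝ, ∫⁻ x : E, g (s, x) = ∫⁻ p, g p := by
    rw [Measure.volume_eq_prod, lintegral_prod _ hg.aemeasurable]
  obtain ⟨a, ha⟩ := halve _ hk (by rwa [hktot]) (by rwa [hktot])
  have hsl : ∀ I : Set ℝ, MeasurableSet I → μ {p | p.1 ∈ I} = ∫⁻ s in I, ∫⁻ x : E, g (s, x) := by
    intro I hI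
    have e : {p : ℝ × E | p.1 ∈ I} = I ×ˢ univ := by ext; simp
    rw [e, hμ, withDensity_apply _ (hI.prod MeasurableSet.univ), Measure.volume_eq_prod, ← Measure.prod_restrict,
      Measure.restrict_univ, lintegral_prod _ hg.aemeasurable]
  have eP : {p : ℝ × E | p.1 - a ∈ Ioi (0:ℝ)} = {p | p.1 ∈ Ioi a} := by ext; simp
  have eN : {p : ℝ × E | p.1 - a ∈ Iio (0:ℝ)} = {p | p.1 ∈ Iio a} := by ext; simp
  refine ⟨a, ?_⟩
  rw [eP, eN]
  set P := {p : ℝ × E | p.1 ∈ Ioi a} with hP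
  set N := {p : ℝ × E | p.1 ∈ Iio a} with hN
  have hPm : MeasurableSet P := measurable_fst measurableSet_Ioi
  have hNm : MeasurableSet N := measurable_fst measurableSet_Iio
  have hhalf : μ N = μ P := by rw [hP, hN, hsl _ measurableSet_Ioi, hsl _ measurableSet_Iio, ha]
  have hP0 : μ P ≠ 0 := by
    intro h
    have h1 := hhalf.trans h
    rw [hP, hsl _ measurableSet_Ioi] at h
    rw [hN, hsl _ measurableSet_Iio, restrict_Iio_eq_restrict_Iic] at h1
    apply h0
    rw [← hktot, ← lintegral_add_compl _ (measurableSet_Ioi (a := a)), compl_Ioi, h, h1, add_zero]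
  have hi1 : Integrable (fun p : ℝ × E => p.1 - a) μ := hInt.fst.sub (integrable_const a)
  have hi2 : Integrable (fun p : ℝ × E => p.2) μ := hInt.snd
  set m := μ.real P with hm
  have hm0 : 0 < m := ENNReal.toReal_pos hP0 (measure_ne_top _ _)
  have hmN : μ.real N = m := by simp [hm, Measure.real, hhalf]
  set p1 := ∫ p in P, (p.1 - a) ∂μ with hp1
  set p2 := ∫ p in N, (p.1 - a) ∂μ with hp2
  have hp1pos : 0 < p1 := by
    rw [hp1, setIntegral_pos_iff_support_of_nonneg_ae]
    · have : Function.support (fun p : ℝ × E => p.1 - a) ∩ P = P := by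
        apply inter_eq_right.2
        intro p hp
        have : a < p.1 := hp
        simp; intro h; linarith
      rw [this]; exact pos_iff_ne_zero.2 hP0
    · filter_upwards [ae_restrict_mem hPm] with p hp
      have : a < p.1 := hp
      simp; linarith
    · exact hi1.integrableOn
  have hp2neg : p2 ≤ 0 := by
    apply setIntegral_nonpos hNm
    intro p hp
    have : p.1 < a := hp
    linarith
  set X1 := ∫ p in P, p.2 ∂μ with hX1
  set X2 := ∫ p in N, p.2 ∂μ with hX2
  have hcalc : ∀ (z w : E) (S : Set (ℝ × E)), ∫ p in S, (p.2 - z - (p.1 - a) • w) ∂μ =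
      (∫ p in S, p.2 ∂μ) - μ.real S • z - (∫ p in S, (p.1 - a) ∂μ) • w := by
    intro z w S
    have j2 := hi2.integrableOn (s := S)
    have j1 := hi1.integrableOn (s := S)
    have j3 : IntegrableOn (fun _ : ℝ × E => z) S μ := integrableOn_const
    have j4 : IntegrableOn (fun p : ℝ × E => p.2 - z) S μ := j2.sub j3
    rw [integral_sub j4 (j1.smul_const w), integral_sub j2 j3, integral_smul_const, setIntegral_const]
  set w := (p1 - p2)⁻¹ • (X1 - X2) with hw
  set z := m⁻¹ • (X1 - p1 • w) with hz
  have e1 : (p1 - p2) • w = X1 - X2 := by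
    rw [hw, smul_smul, mul_inv_cancel₀ (by linarith), one_smul]
  have e2 : m • z = X1 - p1 • w := by
    rw [hz, smul_smul, mul_inv_cancel₀ hm0.ne', one_smul]
  refine ⟨z, w, hhalf, ?_, ?_⟩
  · rw [hcalc, ← hm, ← hp1, ← hX1, e2]; abel
  · rw [hcalc, hmN, ← hp2, ← hX2, e2]
    rw [sub_smul] at e1
    have : X1 = X2 + (p1 • w - p2 • w) := by rw [e1]; abel
    rw [this]; abel

theorem FS_step (B : E →ₗ[ℝ] E →ₗ[ℝ] ℝ) (hsym : ∀ x y, B x y = B y x) (hpos : ∀ x, x ≠ 0 → 0 < B x x)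
    (d : ℕ) (hFS : FS B d) : FS (prodForm B) (d + 1) := by
  intro f g hf hg hfg hft hInt hbar
  have htarget : 0 < ENNReal.ofReal ((2 * Real.pi) ^ (d + 1)) := by
    rw [ENNReal.ofReal_pos]; have := Real.pi_pos; positivity
  by_cases hf0 : ∫⁻ x, f x = 0
  · rw [hf0, zero_mul]
    exact ⟨zero_le, fun h => absurd h htarget.ne⟩
  by_cases hg0 : ∫⁻ x, g x = 0
  · rw [hg0, mul_zero]
    exact ⟨zero_le, fun h => absurd h htarget.ne⟩
  obtain ⟨C, δ, hC, hδ, hdec⟩ := decay (prodForm B) (prodForm_sym B hsym) (prodForm_pos B hpos) f g hf hf0 hInt hbar hfg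
  obtain ⟨hgt, hgint⟩ := moments_of_decay g hg C δ hC hδ hdec
  obtain ⟨a, z, w, hhalf, hb1, hb2⟩ := balance g hg hg0 hgt hgint
  set φ := prodForm B (a, z) with hφ
  have hφm : Measurable φ := φ.continuous_of_finiteDimensional.measurable
  have hBw : Measurable (B w) := (B w).continuous_of_finiteDimensional.measurable
  set g' : ℝ × E → ENNReal := fun p => g (a + p.1, z + p.2 + p.1 • w) with hg'
  set k : ℝ × E → ENNReal := fun q => f q * ENNReal.ofReal (Real.exp (φ q)) with hk
  set f' : ℝ × E → ENNReal := fun q => k (q.1 - B w q.2, q.2) with hf'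
  have hkm : Measurable k := by fun_prop
  have hg'm : Measurable g' := by fun_prop
  have hf'm : Measurable f' := by fun_prop
  have hpair : ∀ p q, g' p * f' q ≤ ENNReal.ofReal (Real.exp (-(prodForm B p q))) := by
    intro p q
    have h1 := hfg (q.1 - B w q.2, q.2) (a + p.1, z + p.2 + p.1 • w)
    simp only [hg', hf', hk]
    calc _ = f (q.1 - B w q.2, q.2) * g (a + p.1, z + p.2 + p.1 • w) * ENNReal.ofReal (Real.exp (φ (q.1 - B w q.2, q.2))) := by ring
      _ ≤ _ := mul_le_mul' h1 le_rfl
      _ = _ := by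
        rw [← ENNReal.ofReal_mul (Real.exp_pos _).le, ← Real.exp_add]
        congr 2
        simp [hφ, hsym q.2]
        ring
  have hneg : ∀ x, ∫⁻ s in Ioi (0:ℝ), g' (-s, x) = ∫⁻ s in Iio (0:ℝ), g' (s, x) := by
    intro x
    rw [restrict_Iio_map]
    exact (lintegral_map_equiv (fun s => g' (s, x)) (MeasurableEquiv.neg ℝ)).symm
  have m1 := marginal_eq g hg a z w (Ioi 0) measurableSet_Ioi
  have m2 := marginal_eq g hg a z w (Iio 0) measurableSet_Iio
  have hm : Measurable (fun p : ℝ × E => p.2 - z - (p.1 - a) • w) := by fun_prop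
  have hfinm : IsFiniteMeasure (volume.withDensity g) := isFiniteMeasure_withDensity hgt
  have mass : ∀ I : Set ℝ, MeasurableSet I → ∫⁻ x, ∫⁻ s in I, g' (s, x) = (volume.withDensity g) {p | p.1 - a ∈ I} := by
    intro I hI
    have := congrArg (fun μ => μ univ) (marginal_eq g hg a z w I hI)
    rw [withDensity_apply _ MeasurableSet.univ, Measure.restrict_univ, Measure.map_apply hm MeasurableSet.univ,
      preimage_univ, Measure.restrict_apply_univ] at this
    exact this
  have hi : Integrable (fun p : ℝ × E => p.2 - z - (p.1 - a) • w) (volume.withDensity g) :=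
    (hgint.snd.sub (integrable_const z)).sub ((hgint.fst.sub (integrable_const a)).smul_const w)
  have hI1 : ∀ I : Set ℝ, Integrable (fun x : E => x)
      (((volume.withDensity g).restrict {p | p.1 - a ∈ I}).map (fun p => p.2 - z - (p.1 - a) • w)) := by
    intro I
    exact (integrable_map_measure measurable_id.aestronglyMeasurable hm.aemeasurable).2 hi.integrableOn
  have hI2 : ∀ I : Set ℝ, ∫ x, x ∂(((volume.withDensity g).restrict {p | p.1 - a ∈ I}).map (fun p => p.2 - z - (p.1 - a) • w))
      = ∫ p in {p : ℝ × E | p.1 - a ∈ I}, (p.2 - z - (p.1 - a) • w) ∂(volume.withDensity g) := by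
    intro I
    exact integral_map hm.aemeasurable measurable_id.aestronglyMeasurable
  have main := two_side B hsym hpos d hFS g' f' hg'm hf'm hpair
    (by rw [mass _ measurableSet_Ioi]; exact measure_ne_top _ _)
    (by simp only [hneg]; rw [mass _ measurableSet_Ioi, mass _ measurableSet_Iio, hhalf])
    (by simp only [hg']; rw [m1]; exact hI1 _)
    (by simp only [hg']; rw [m1, hI2, hb1])
    (by simp only [hneg]; simp only [hg']; rw [m2]; exact hI1 _)
    (by simp only [hneg]; simp only [hg']; rw [m2, hI2, hb2])
  have t1 : ∫⁻ p, g' p = ∫⁻ p, g p := lint_shear g hg a z w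
  have t2 : ∫⁻ p, f' p = ∫⁻ p, k p := lint_shear' k hkm (B w)
  rw [t1, t2] at main
  obtain ⟨j1, j2⟩ := jensen f hf hf0 hft hInt hbar φ
  refine ⟨?_, ?_⟩
  · rw [mul_comm]
    exact (mul_le_mul' le_rfl j1).trans main.1
  intro heq
  rw [mul_comm] at heq
  have hle : (∫⁻ p, g p) * (∫⁻ p, k p) ≤ (∫⁻ p, g p) * ∫⁻ p, f p := by rw [heq]; exact main.1
  have hle2 := (ENNReal.mul_le_mul_iff_right hg0 hgt).1 hle
  have hφ0 := j2 hle2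
  have haz : ((a, z) : ℝ × E) = 0 := by
    by_contra hne
    have := prodForm_pos B hpos _ hne
    rw [← hφ, hφ0] at this
    simp at this
  have ha0 : a = 0 := congrArg Prod.fst haz
  have hz0 : z = 0 := congrArg Prod.snd haz
  have hkf : k = f := by
    funext q
    simp [hk, hφ0]
  have hgp := main.2 (by rw [hkf, heq])
  apply gauss_transfer (prodForm B) (prodForm_sym B hsym) (shearA w) (shearT B w) (shear_dual B w)
  convert hgp using 1
  · funext p
    simp [hg', shearA, ha0, hz0]
  · funext p
    simp [hf', shearT, hkf]
end


section
variable {V W : Type*} [NormedAddCommGroup V] [NormedSpace ℝ V] [MeasureSpace V] [BorelSpace V]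
  [NormedAddCommGroup W] [NormedSpace ℝ W] [MeasureSpace W] [BorelSpace W]

lemma withDensity_comp_equiv (e : V ≃L[ℝ] W) (he : MeasurePreserving e volume volume) (f : W → ENNReal)
    (hf : Measurable f) :
    volume.withDensity (fun x => f (e x)) = (volume.withDensity f).map e.symm := by
  have hm : Measurable e.symm := e.symm.continuous.measurable
  ext S hS
  rw [withDensity_apply _ hS, Measure.map_apply hm hS, withDensity_apply _ (hm hS),
    ← he.setLIntegral_comp_preimage (hm hS) hf]
  congr 2
  ext x; simp

lemma FS_transfer [FiniteDimensional ℝ V] [FiniteDimensional ℝ W] (BV : V →ₗ[ℝ] V →ₗ[ℝ] ℝ)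
    (BW : W →ₗ[ℝ] W →ₗ[ℝ] ℝ) (d : ℕ) (e : V ≃L[ℝ] W)
    (he : MeasurePreserving e volume volume) (hB : ∀ x y, BW (e x) (e y) = BV x y) (h : FS BV d) : FS BW d := by
  intro f g hf hg hfg hft hInt hbar
  have hm : Measurable e := e.continuous.measurable
  have hms : Measurable e.symm := e.symm.continuous.measurable
  have hes : MeasurePreserving e.symm volume volume := by
    refine ⟨hms, ?_⟩
    rw [← he.map_eq, Measure.map_map hms hm]
    simp
  have i1 : ∫⁻ x, f (e x) = ∫⁻ x, f x := he.lintegral_comp hf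
  have i2 : ∫⁻ x, g (e x) = ∫⁻ x, g x := he.lintegral_comp hg
  have main := h (fun x => f (e x)) (fun x => g (e x)) (hf.comp hm) (hg.comp hm)
    (fun x y => by rw [← hB]; exact hfg _ _) (by rwa [i1])
    (by
      rw [withDensity_comp_equiv e he f hf]
      exact (integrable_map_measure measurable_id.aestronglyMeasurable hms.aemeasurable).2
        (e.symm.toContinuousLinearMap.integrable_comp hInt))
    (by
      rw [withDensity_comp_equiv e he f hf, integral_map (f := fun x : V => x) hms.aemeasurable measurable_id.aestronglyMeasurable]
      have := e.symm.toContinuousLinearMap.integral_comp_comm hInt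
      simp only [ContinuousLinearEquiv.coe_coe] at this
      rw [this, hbar, map_zero])
  rw [i1, i2] at main
  refine ⟨main.1, fun heq => ?_⟩
  obtain ⟨L, Q, C, hC, hLQ, h1, h2⟩ := main.2 heq
  refine ⟨(e.symm.toLinearEquiv.trans L).trans e.toLinearEquiv,
    (e.symm.toLinearEquiv.trans Q).trans e.toLinearEquiv, C, hC, ?_, ?_, ?_⟩
  · intro x y
    simp [hB]
    rw [← hLQ, ← hB]
    simp
  · filter_upwards [hes.quasiMeasurePreserving.ae h1] with x hx
    simpa [hB] using hx
  · filter_upwards [hes.quasiMeasurePreserving.ae h2] with x hx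
    simpa [hB] using hx
end

/-- dot product as a bilinear form -/
def dotForm (n : ℕ) : (Fin n → ℝ) →ₗ[ℝ] (Fin n → ℝ) →ₗ[ℝ] ℝ :=
  LinearMap.mk₂ ℝ (fun x y => ∑ i, x i * y i)
    (by intros; simp [add_mul, Finset.sum_add_distrib])
    (by intros; simp [Finset.mul_sum, mul_assoc])
    (by intros; simp [mul_add, Finset.sum_add_distrib])
    (by intros; simp [Finset.mul_sum, mul_left_comm])

@[simp] lemma dotForm_apply (n : ℕ) (x y : Fin n → ℝ) : dotForm n x y = ∑ i, x i * y i := rfl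

lemma dotForm_sym (n : ℕ) (x y : Fin n → ℝ) : dotForm n x y = dotForm n y x := by
  simp [mul_comm]

lemma dotForm_pos (n : ℕ) (x : Fin n → ℝ) (hx : x ≠ 0) : 0 < dotForm n x x := by
  rw [dotForm_apply]
  obtain ⟨i, hi⟩ := Function.ne_iff.1 hx
  exact Finset.sum_pos' (fun j _ => mul_self_nonneg _) ⟨i, Finset.mem_univ _, by simpa using hi⟩

lemma FS_zero : FS (dotForm 0) 0 := by
  intro f g hf hg hfg hft hInt hbar
  have hu : (volume : Measure (Fin 0 → ℝ)) univ = 1 := by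
    rw [volume_pi, Measure.pi_univ]; simp
  have i1 : ∀ h : (Fin 0 → ℝ) → ENNReal, ∫⁻ x, h x = h 0 := by
    intro h
    rw [lintegral_unique, hu, mul_one]
    congr 1
    exact Subsingleton.elim _ _
  rw [i1] at hft
  rw [i1, i1]
  refine ⟨by simpa using hfg 0 0, fun heq => ?_⟩
  simp only [pow_zero, ENNReal.ofReal_one] at heq
  have hf0 : f 0 ≠ 0 := by intro h; rw [h] at heq; simp at heq
  have hC : 0 < (f 0).toReal := ENNReal.toReal_pos hf0 hft
  have hg0 : g 0 = (f 0)⁻¹ := ENNReal.eq_inv_of_mul_eq_one_left (by rwa [mul_comm])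
  have hx : ∀ x : Fin 0 → ℝ, x = 0 := fun x => Subsingleton.elim _ _
  refine ⟨LinearEquiv.refl ℝ _, LinearEquiv.refl ℝ _, (f 0).toReal, hC, ?_, ?_, ?_⟩
  · intro x y; simp
  · refine ae_of_all _ fun x => ?_
    have e0 : (dotForm 0) ((LinearEquiv.refl ℝ (Fin 0 → ℝ)) 0) ((LinearEquiv.refl ℝ (Fin 0 → ℝ)) 0) = 0 := by simp
    rw [hx x, e0, zero_div, neg_zero, Real.exp_zero, mul_one, ENNReal.ofReal_toReal hft]
  · refine ae_of_all _ fun x => ?_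
    have e0 : (dotForm 0) ((LinearEquiv.refl ℝ (Fin 0 → ℝ)) 0) ((LinearEquiv.refl ℝ (Fin 0 → ℝ)) 0) = 0 := by simp
    rw [hx x, e0, zero_div, neg_zero, Real.exp_zero, mul_one, ENNReal.ofReal_inv_of_pos hC, ENNReal.ofReal_toReal hft,
      LinearEquiv.refl_apply, hg0]

/-- the continuous linear equivalence `ℝ × (Fin n → ℝ) ≃ Fin (n+1) → ℝ`. -/
def consEquiv (n : ℕ) : (ℝ × (Fin n → ℝ)) ≃L[ℝ] (Fin (n + 1) → ℝ) :=
  (Fin.consEquivL ℝ (fun _ : Fin (n + 1) => ℝ))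

lemma FS_all (n : ℕ) : FS (dotForm n) n := by
  induction n with
  | zero => exact FS_zero
  | succ n ih =>
    refine FS_transfer (prodForm (dotForm n)) (dotForm (n + 1)) (n + 1) (consEquiv n) ?_ ?_
      (FS_step (dotForm n) (dotForm_sym n) (dotForm_pos n) n ih)
    · have := (volume_preserving_piFinSuccAbove (fun _ : Fin (n + 1) => ℝ) 0).symm
      have h : (consEquiv n : ℝ × (Fin n → ℝ) → Fin (n + 1) → ℝ) = (MeasurableEquiv.piFinSuccAbove (fun _ : Fin (n + 1) => ℝ) 0).symm := by
        ext p i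
        refine Fin.cases ?_ (fun j => ?_) i
        · simp [consEquiv, Fin.consEquiv]
        · simp [consEquiv, Fin.consEquiv]
      rw [h]
      exact this
    · intro x y
      simp [consEquiv, Fin.sum_univ_succ]

lemma FS_euclid (n : ℕ) : FS (innerₗ (EuclideanSpace ℝ (Fin n))) n := by
  refine FS_transfer (dotForm n) _ n (EuclideanSpace.equiv (Fin n) ℝ).symm ?_ ?_ (FS_all n)
  · exact PiLp.volume_preserving_toLp (Fin n)
  · intro x y
    simp [PiLp.inner_apply, mul_comm]


section body
open scoped Pointwise
variable {n : ℕ}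

/-- The Gaussian-type function attached to a convex body. -/
noncomputable def gf (hb : ℝ) (K : Set (EuclideanSpace ℝ (Fin n))) (x : EuclideanSpace ℝ (Fin n)) : ENNReal :=
  ENNReal.ofReal (Real.exp (-(hb / 2 * gauge K x ^ 2)))

lemma gf_meas (hb : ℝ) (K : Set (EuclideanSpace ℝ (Fin n))) (hc : Convex ℝ K) (h0 : K ∈ 𝓝 0) :
    Measurable (gf hb K) := by
  have := continuous_gauge hc h0
  unfold gf
  exact ENNReal.measurable_ofReal.comp (Continuous.measurable (by fun_prop))

lemma gf_moments (hb : ℝ) (hhb : 0 < hb) (K : Set (EuclideanSpace ℝ (Fin n))) (hc : Convex ℝ K) (h0 : K ∈ 𝓝 0)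
    (hbd : Bornology.IsBounded K) :
    ∫⁻ x, gf hb K x ≠ ⊤ ∧ Integrable (fun x : EuclideanSpace ℝ (Fin n) => x) (volume.withDensity (gf hb K)) := by
  obtain ⟨R, hR0, hR⟩ := hbd.subset_closedBall_lt 0 0
  refine moments_of_decay _ (gf_meas hb K hc h0) (ENNReal.ofReal (Real.exp (1/(2*hb)))) (1 / R) ENNReal.ofReal_ne_top
    (by positivity) fun y => ?_
  have h1 := le_gauge_of_subset_closedBall (x := y) (absorbent_nhds_zero h0) hR0.le hR
  rw [← ENNReal.ofReal_mul (Real.exp_pos _).le, ← Real.exp_add]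
  apply ENNReal.ofReal_le_ofReal
  apply Real.exp_le_exp.2
  have h2 : 1 / R * ‖y‖ = ‖y‖ / R := by ring
  rw [h2]
  set t := gauge K y
  have h3 : 1/(2*hb) - t + hb/2*t^2 = (hb * t - 1)^2 / (2*hb) := by field_simp; ring
  have h4 : 0 ≤ (hb * t - 1)^2 / (2*hb) := by positivity
  linarith

lemma gf_integral (hb : ℝ) (hhb : 0 < hb) (K : Set (EuclideanSpace ℝ (Fin n))) (hc : Convex ℝ K) (h0 : K ∈ 𝓝 0)
    (hbd : Bornology.IsBounded K) (hs : ∀ x ∈ K, -x ∈ K) :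
    ∫⁻ x, gf hb K x = ENNReal.ofReal (Real.sqrt (2/hb) ^ n * Real.Gamma ((n:ℝ)/2+1)) * volume K := by
  have hG : 0 < Real.Gamma ((n:ℝ)/2+1) := Real.Gamma_pos_of_pos (by positivity)
  set c := Real.sqrt (hb/2) with hcdef
  have hc0 : 0 < c := Real.sqrt_pos.2 (by positivity)
  have hcs : c^2 = hb/2 := Real.sq_sqrt (by positivity)
  have hci : Real.sqrt (2/hb) = c⁻¹ := by rw [hcdef, ← Real.sqrt_inv, inv_div]
  have habs := absorbent_nhds_zero (𝕜 := ℝ) h0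
  have hvN : Bornology.IsVonNBounded ℝ K := (NormedSpace.isVonNBounded_iff ℝ).2 hbd
  have key := measure_lt_one_eq_integral_div_gamma (volume : Measure (EuclideanSpace ℝ (Fin n)))
    (g := fun x => c * gauge K x) (by simp) (fun x => by simp only [gauge_neg hs])
    (fun x y => by
      have := gauge_add_le hc habs x y
      nlinarith)
    (fun {x} hx => by
      by_contra hne
      have := (gauge_pos habs hvN).2 hne
      have : 0 < c * gauge K x := by positivity
      linarith)
    (fun r x => by
      have : gauge K (r • x) = |r| * gauge K x := by
        rcases le_total 0 r with hr | hr
        · rw [gauge_smul_of_nonneg hr, abs_of_nonneg hr, smul_eq_mul]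
        · rw [← gauge_neg hs, ← neg_smul, gauge_smul_of_nonneg (neg_nonneg.2 hr), abs_of_nonpos hr, smul_eq_mul]
      simp only [this]
      apply le_of_eq; ring)
    (p := 2) (by norm_num)
  have hset : {x : EuclideanSpace ℝ (Fin n) | c * gauge K x < 1} = c⁻¹ • interior K := by
    ext x
    rw [Set.mem_inv_smul_set_iff₀ hc0.ne', ← gauge_lt_one_iff_mem_interior hc h0, gauge_smul_of_nonneg hc0.le]
    rfl
  rw [hset, Measure.addHaar_smul, measure_interior_of_null_frontier (hc.addHaar_frontier volume),
    finrank_euclideanSpace_fin] at key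
  have hI : ∫⁻ x, gf hb K x = ENNReal.ofReal (∫ x, Real.exp (-(c * gauge K x)^(2:ℝ))) := by
    have he : ∀ x, Real.exp (-(c * gauge K x)^(2:ℝ)) = Real.exp (-(hb / 2 * gauge K x ^ 2)) := by
      intro x
      rw [Real.rpow_two, mul_pow, hcs]
    simp_rw [he]
    have hm : Continuous (fun x => Real.exp (-(hb / 2 * gauge K x ^ 2))) := by
      have := continuous_gauge hc h0
      fun_prop
    rw [ofReal_integral_eq_lintegral_ofReal]
    · rfl
    · refine ⟨hm.aestronglyMeasurable, ?_⟩
      rw [hasFiniteIntegral_iff_ofReal (Eventually.of_forall fun x => (Real.exp_pos _).le)]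
      exact lt_top_iff_ne_top.2 (gf_moments hb hhb K hc h0 hbd).1
    · exact Eventually.of_forall fun x => (Real.exp_pos _).le
  rw [hI, hci, mul_comm (c⁻¹ ^ n), ENNReal.ofReal_mul hG.le, mul_assoc]
  rw [abs_of_pos (by positivity)] at key
  rw [key, ← ENNReal.ofReal_mul hG.le, mul_div_cancel₀ _ hG.ne']

lemma gf_bary (hb : ℝ) (hhb : 0 < hb) (K : Set (EuclideanSpace ℝ (Fin n))) (hc : Convex ℝ K) (h0 : K ∈ 𝓝 0)
    (hs : ∀ x ∈ K, -x ∈ K) :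
    ∫ x, x ∂((volume : Measure (EuclideanSpace ℝ (Fin n))).withDensity (gf hb K)) = 0 := by
  have hgm := gf_meas hb K hc h0
  rw [integral_withDensity_eq_integral_toReal_smul hgm
    (Eventually.of_forall fun x => ENNReal.ofReal_lt_top)]
  have h1 := integral_neg_eq_self (fun x : EuclideanSpace ℝ (Fin n) => (gf hb K x).toReal • x) volume
  have h2 : ∀ x, (gf hb K (-x)).toReal • (-x) = -((gf hb K x).toReal • x) := by
    intro x
    simp only [gf, gauge_neg hs, smul_neg]
  simp_rw [h2, integral_neg] at h1
  have h3 : (2:ℝ) • (∫ x, (gf hb K x).toReal • x) = 0 := by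
    rw [two_smul]; nth_rewrite 1 [← h1]; simp
  exact (smul_eq_zero.1 h3).resolve_left two_ne_zero

end body


end Prelim

section fin
open Set Filter Topology
variable {n : ℕ}

lemma polar_pairing (hb : ℝ) (hhb : 0 < hb) (X : Set (EuclideanSpace ℝ (Fin n))) (hc : Convex ℝ X) (h0 : X ∈ 𝓝 0)
    (hcl : IsClosed X) (hbd : Bornology.IsBounded X)
    (hc2 : Convex ℝ (polarDualSet n hb X)) (h02 : polarDualSet n hb X ∈ 𝓝 0)
    (hcl2 : IsClosed (polarDualSet n hb X)) (hbd2 : Bornology.IsBounded (polarDualSet n hb X))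
    (x y : EuclideanSpace ℝ (Fin n)) :
    (⟪x, y⟫ : ℝ) ≤ hb * (gauge X x * gauge (polarDualSet n hb X) y) := by
  have mem : ∀ (K : Set (EuclideanSpace ℝ (Fin n))), Convex ℝ K → K ∈ 𝓝 0 → IsClosed K → ∀ z, 0 < gauge K z →
      (gauge K z)⁻¹ • z ∈ K := by
    intro K k1 k2 k3 z hz
    suffices h : (gauge K z)⁻¹ • z ∈ closure K by rwa [k3.closure_eq] at h
    rw [← gauge_le_one_iff_mem_closure k1 k2, gauge_smul_of_nonneg (by positivity), smul_eq_mul,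
      inv_mul_cancel₀ hz.ne']
  by_cases hx : x = 0
  · simp [hx]
  by_cases hy : y = 0
  · simp [hy]
  have px := (gauge_pos (absorbent_nhds_zero h0) ((NormedSpace.isVonNBounded_iff ℝ).2 hbd)).2 hx
  have py := (gauge_pos (absorbent_nhds_zero h02) ((NormedSpace.isVonNBounded_iff ℝ).2 hbd2)).2 hy
  have m1 := mem _ hc h0 hcl x px
  have m2 := mem _ hc2 h02 hcl2 y py
  have := m2 _ m1
  rw [real_inner_smul_left, real_inner_smul_right, real_inner_comm, ← mul_assoc, ← mul_inv, inv_mul_le_iff₀ (by positivity)] at this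
  linarith

lemma polar_facts (hb : ℝ) (hhb : 0 < hb) (X : Set (EuclideanSpace ℝ (Fin n))) (h0 : X ∈ 𝓝 0)
    (hbd : Bornology.IsBounded X) (hs : ∀ x ∈ X, -x ∈ X) :
    Convex ℝ (polarDualSet n hb X) ∧ polarDualSet n hb X ∈ 𝓝 0 ∧ IsClosed (polarDualSet n hb X) ∧
      Bornology.IsBounded (polarDualSet n hb X) ∧ ∀ x ∈ polarDualSet n hb X, -x ∈ polarDualSet n hb X := by
  refine ⟨?_, ?_, ?_, ?_, ?_⟩
  · intro p hp q hq a b ha hb' hab x hx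
    have h1 := hp x hx
    have h2 := hq x hx
    rw [inner_add_left, real_inner_smul_left, real_inner_smul_left]
    calc a * ⟪p, x⟫ + b * ⟪q, x⟫ ≤ a * hb + b * hb := by gcongr
      _ = hb := by rw [← add_mul, hab, one_mul]
  · obtain ⟨R, hR0, hR⟩ := hbd.subset_closedBall_lt 0 0
    refine Filter.mem_of_superset (Metric.closedBall_mem_nhds 0 (div_pos hhb hR0)) ?_
    intro p hp x hx
    have h1 := hR hx
    rw [mem_closedBall_zero_iff] at h1 hp
    calc (⟪p, x⟫ : ℝ) ≤ ‖p‖ * ‖x‖ := real_inner_le_norm _ _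
      _ ≤ hb / R * R := by gcongr
      _ = hb := by field_simp
  · have : polarDualSet n hb X = ⋂ x ∈ X, {p | (⟪p, x⟫ : ℝ) ≤ hb} := by
      ext p; simp [polarDualSet]
    rw [this]
    refine isClosed_biInter fun x _ => isClosed_le (by fun_prop) continuous_const
  · obtain ⟨r, hr0, hr⟩ := Metric.nhds_basis_closedBall.mem_iff.1 h0
    refine (Metric.isBounded_closedBall (x := (0 : EuclideanSpace ℝ (Fin n))) (r := hb / r)).subset ?_
    intro p hp
    rw [mem_closedBall_zero_iff, le_div_iff₀ hr0]
    by_cases hp0 : p = 0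
    · simp [hp0, hhb.le]
    have hpp : 0 < ‖p‖ := norm_pos_iff.2 hp0
    have := hp ((r / ‖p‖) • p) (hr (by
      rw [mem_closedBall_zero_iff, norm_smul, Real.norm_of_nonneg (by positivity)]
      field_simp; exact le_rfl))
    rw [real_inner_smul_right, real_inner_self_eq_norm_sq] at this
    calc ‖p‖ * r = r / ‖p‖ * ‖p‖^2 := by field_simp
      _ ≤ hb := this
  · intro p hp x hx
    have := hp (-x) (hs x hx)
    rwa [inner_neg_right, ← inner_neg_left] at this

lemma body_nhds (X : Set (EuclideanSpace ℝ (Fin n))) (hc : Convex ℝ X) (hi : (interior X).Nonempty)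
    (hs : ∀ x ∈ X, -x ∈ X) : X ∈ 𝓝 0 := by
  obtain ⟨x, hx⟩ := hi
  have h1 := hc.combo_interior_self_mem_interior hx (hs x (interior_subset hx)) (a := 1/2) (b := 1/2)
    (by norm_num) (by norm_num) (by norm_num)
  rw [smul_neg, add_neg_cancel] at h1
  exact mem_interior_iff_mem_nhds.1 h1

lemma vol_ball_all (hb : ℝ) (hhb : 0 < hb) :
    volume (Metric.closedBall (0 : EuclideanSpace ℝ (Fin n)) (Real.sqrt hb)) =
      ENNReal.ofReal (Real.sqrt hb ^ n * (Real.sqrt Real.pi ^ n / Real.Gamma ((n : ℝ) / 2 + 1))) := by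
  rcases Nat.eq_zero_or_pos n with rfl | hn
  · have : Metric.closedBall (0 : EuclideanSpace ℝ (Fin 0)) (Real.sqrt hb) = univ := by
      ext x
      have : x = 0 := Subsingleton.elim _ _
      simp [this]
    rw [this, ← (PiLp.volume_preserving_toLp (Fin 0)).measure_preimage MeasurableSet.univ.nullMeasurableSet]
    simp [volume_pi]
  · have : Nonempty (Fin n) := ⟨⟨0, hn⟩⟩
    rw [EuclideanSpace.volume_closedBall, Fintype.card_fin, ENNReal.ofReal_mul (by positivity),
      ENNReal.ofReal_pow (by positivity)]

lemma det_adj (A : EuclideanSpace ℝ (Fin n) →ₗ[ℝ] EuclideanSpace ℝ (Fin n)) :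
    LinearMap.det (LinearMap.adjoint A) = LinearMap.det A := by
  have b := EuclideanSpace.basisFun (Fin n) ℝ
  rw [← LinearMap.det_toMatrix b.toBasis, ← LinearMap.det_toMatrix b.toBasis A, LinearMap.toMatrix_adjoint,
    Matrix.det_conjTranspose]
  simp

lemma polar_ellipsoid (hb : ℝ) (hhb : 0 < hb) (A : EuclideanSpace ℝ (Fin n) ≃ₗ[ℝ] EuclideanSpace ℝ (Fin n)) :
    polarDualSet n hb (⇑A '' Metric.closedBall 0 (Real.sqrt hb)) =
      (LinearMap.adjoint A.toLinearMap) ⁻¹' Metric.closedBall 0 (Real.sqrt hb) := by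
  have hsq := Real.mul_self_sqrt hhb.le
  have hs0 := Real.sqrt_pos.2 hhb
  have hadj : ∀ p z : EuclideanSpace ℝ (Fin n), (⟪p, A z⟫ : ℝ) = ⟪LinearMap.adjoint A.toLinearMap p, z⟫ := by
    intro p z
    rw [LinearMap.adjoint_inner_left]; rfl
  ext p
  set q := LinearMap.adjoint A.toLinearMap p with hq
  simp only [polarDualSet, mem_ofPred_eq, mem_preimage, mem_closedBall_zero_iff, ← hq]
  constructor
  · intro h
    by_cases hq0 : q = 0
    · simp [hq0]
    have hpp : 0 < ‖q‖ := norm_pos_iff.2 hq0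
    have := h _ (mem_image_of_mem _ (show (Real.sqrt hb / ‖q‖) • q ∈ Metric.closedBall 0 (Real.sqrt hb) by
      rw [mem_closedBall_zero_iff, norm_smul, Real.norm_of_nonneg (by positivity)]
      field_simp; exact le_rfl))
    rw [hadj, ← hq, real_inner_smul_right, real_inner_self_eq_norm_sq] at this
    have h2 : Real.sqrt hb / ‖q‖ * ‖q‖^2 = Real.sqrt hb * ‖q‖ := by field_simp
    rw [h2] at this
    exact le_of_mul_le_mul_left (this.trans_eq hsq.symm) hs0
  · rintro h _ ⟨z, hz, rfl⟩
    rw [mem_closedBall_zero_iff] at hz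
    rw [hadj, ← hq]
    calc (⟪q, z⟫ : ℝ) ≤ ‖q‖ * ‖z‖ := real_inner_le_norm _ _
      _ ≤ Real.sqrt hb * Real.sqrt hb := by gcongr
      _ = hb := hsq

lemma ellipsoid_eq (hb : ℝ) (hhb : 0 < hb) (A : EuclideanSpace ℝ (Fin n) ≃ₗ[ℝ] EuclideanSpace ℝ (Fin n)) :
    volume (⇑A '' Metric.closedBall 0 (Real.sqrt hb)) *
      volume (polarDualSet n hb (⇑A '' Metric.closedBall 0 (Real.sqrt hb))) =
    ENNReal.ofReal ((Real.pi * hb) ^ n / Real.Gamma ((n : ℝ) / 2 + 1) ^ 2) := by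
  have hG : 0 < Real.Gamma ((n:ℝ)/2+1) := Real.Gamma_pos_of_pos (by positivity)
  have hd : LinearMap.det A.toLinearMap ≠ 0 := (LinearEquiv.isUnit_det' A).ne_zero
  have h1 := Measure.addHaar_image_linearMap (volume : Measure (EuclideanSpace ℝ (Fin n))) A.toLinearMap
    (Metric.closedBall 0 (Real.sqrt hb))
  rw [LinearEquiv.coe_coe] at h1
  rw [polar_ellipsoid hb hhb, Measure.addHaar_preimage_linearMap _ (by rwa [det_adj]), det_adj, h1, vol_ball_all hb hhb,
    ← ENNReal.ofReal_mul (by positivity), ← ENNReal.ofReal_mul (by positivity), ← ENNReal.ofReal_mul (by positivity)]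
  congr 1
  have e1 : |LinearMap.det A.toLinearMap| ≠ 0 := abs_ne_zero.2 hd
  have e2 : (Real.pi * hb)^n = (Real.sqrt hb ^ n) ^ 2 * (Real.sqrt Real.pi ^ n)^2 := by
    rw [← pow_mul, ← pow_mul, mul_comm n 2, pow_mul, pow_mul, Real.sq_sqrt hhb.le, Real.sq_sqrt Real.pi_pos.le, mul_pow,
      mul_comm]
  rw [e2, abs_inv]
  field_simp

end fin

/-- **Blaschke–Santaló inequality.** For a symmetric convex body `X ⊂ ℝⁿ`, the Mahler volume
satisfies `Vol(X)·Vol(X^ħ) ≤ (πħ)ⁿ/Γ(n/2+1)² = Vol(Bⁿ(√ħ))²`, with equality iff `X` is an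
ellipsoid centered at the origin (the image of `Bⁿ(√ħ)` by an invertible linear map). -/
theorem blaschke_santalo (n : ℕ) (hb : ℝ) (hhb : 0 < hb)
    (X : Set (EuclideanSpace ℝ (Fin n)))
    (hXc : IsCompact X) (hXconv : Convex ℝ X) (hXint : (interior X).Nonempty) (hXsym : X = -X) :
    volume X * volume (polarDualSet n hb X) ≤
        ENNReal.ofReal ((Real.pi * hb) ^ n / Real.Gamma ((n : ℝ) / 2 + 1) ^ 2) ∧
      (volume X * volume (polarDualSet n hb X) =
          ENNReal.ofReal ((Real.pi * hb) ^ n / Real.Gamma ((n : ℝ) / 2 + 1) ^ 2) ↔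
        ∃ A : EuclideanSpace ℝ (Fin n) ≃ₗ[ℝ] EuclideanSpace ℝ (Fin n),
          X = ⇑A '' Metric.closedBall 0 (Real.sqrt hb)) := by
  have hG : 0 < Real.Gamma ((n:ℝ)/2+1) := Real.Gamma_pos_of_pos (by positivity)
  have hs : ∀ x ∈ X, -x ∈ X := by
    intro x hx
    rw [hXsym, Set.mem_neg, neg_neg]; exact hx
  have h0 := body_nhds X hXconv hXint hs
  have hcl := hXc.isClosed
  have hbd := hXc.isBounded
  obtain ⟨hc2, h02, hcl2, hbd2, hs2⟩ := polar_facts hb hhb X h0 hbd hs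
  set Y := polarDualSet n hb X with hY
  obtain ⟨hfin, hInt⟩ := gf_moments hb hhb X hXconv h0 hbd
  have key := FS_euclid n (gf hb X) (gf hb Y) (gf_meas hb X hXconv h0) (gf_meas hb Y hc2 h02)
    (by
      intro x y
      have h1 := polar_pairing hb hhb X hXconv h0 hcl hbd hc2 h02 hcl2 hbd2 x y
      unfold gf
      rw [← ENNReal.ofReal_mul (Real.exp_pos _).le, ← Real.exp_add]
      apply ENNReal.ofReal_le_ofReal
      apply Real.exp_le_exp.2
      rw [innerₗ_apply_apply]
      nlinarith [mul_nonneg hhb.le (sq_nonneg (gauge X x - gauge Y y))])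
    hfin hInt (gf_bary hb hhb X hXconv h0 hs)
  rw [gf_integral hb hhb X hXconv h0 hbd hs, gf_integral hb hhb Y hc2 h02 hbd2 hs2] at key
  set a := Real.sqrt (2/hb) ^ n * Real.Gamma ((n:ℝ)/2+1) with ha
  have ha0 : 0 < a := by
    have : 0 < Real.sqrt (2/hb) := Real.sqrt_pos.2 (by positivity)
    positivity
  have e1 : (2 * Real.pi)^n = a * a * ((Real.pi * hb) ^ n / Real.Gamma ((n : ℝ) / 2 + 1) ^ 2) := by
    have : a * a = (2/hb)^n * Real.Gamma ((n : ℝ) / 2 + 1) ^ 2 := by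
      have h3 : (Real.sqrt (2/hb) ^ n)^2 = (2/hb)^n := by
        rw [← pow_mul, mul_comm, pow_mul, Real.sq_sqrt (by positivity)]
      rw [ha, ← h3]; ring
    rw [this]
    have h4 : (2 * Real.pi)^n = (2/hb)^n * (Real.pi * hb)^n := by
      rw [← mul_pow]; congr 1; field_simp
    rw [h4]
    field_simp
  clear_value a
  rw [e1, ENNReal.ofReal_mul (by positivity), ENNReal.ofReal_mul ha0.le] at key
  set T := ENNReal.ofReal ((Real.pi * hb) ^ n / Real.Gamma ((n : ℝ) / 2 + 1) ^ 2)
  have e2 : ENNReal.ofReal a * volume X * (ENNReal.ofReal a * volume Y) =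
      ENNReal.ofReal a * ENNReal.ofReal a * (volume X * volume Y) := by ring
  have hz : ENNReal.ofReal a * ENNReal.ofReal a ≠ 0 := by simp [ha0]
  have ht : ENNReal.ofReal a * ENNReal.ofReal a ≠ ⊤ := by finiteness
  rw [e2, ENNReal.mul_le_mul_iff_right hz ht] at key
  refine ⟨key.1, ?_, ?_⟩
  · intro heq
    obtain ⟨L, Q, C, hC, -, hf, -⟩ := key.2 (by rw [heq])
    have hLc := contL L
    have hgc := continuous_gauge hXconv h0
    have hall : (fun x => gf hb X x) = fun x => ENNReal.ofReal (C * Real.exp (-(innerₗ (EuclideanSpace ℝ (Fin n)) (L x) (L x) / 2))) := by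
      refine Measure.eq_of_ae_eq (μ := volume) hf ?_ ?_
      · unfold gf
        exact ENNReal.continuous_ofReal.comp (by fun_prop)
      · simp only [innerₗ_apply_apply]
        exact ENNReal.continuous_ofReal.comp (by fun_prop)
    have hreal : ∀ x, Real.exp (-(hb / 2 * gauge X x ^ 2)) = C * Real.exp (-(‖L x‖^2 / 2)) := by
      intro x
      have := congrFun hall x
      simp only [gf, innerₗ_apply_apply, real_inner_self_eq_norm_sq] at this
      rwa [ENNReal.ofReal_eq_ofReal_iff (Real.exp_pos _).le (by positivity)] at this
    have hC1 : C = 1 := by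
      have := hreal 0
      simp at this
      exact this.symm
    have hg : ∀ x, hb * gauge X x ^ 2 = ‖L x‖^2 := by
      intro x
      have := hreal x
      rw [hC1, one_mul, Real.exp_eq_exp] at this
      linarith
    refine ⟨L.symm, ?_⟩
    ext x
    rw [LinearEquiv.image_symm_eq_preimage, Set.mem_preimage, mem_closedBall_zero_iff, Real.le_sqrt (norm_nonneg _) hhb.le,
      ← hg, mul_le_iff_le_one_right hhb, sq_le_one_iff₀ (gauge_nonneg _), gauge_le_one_iff_mem_closure hXconv h0,
      hcl.closure_eq]
  · rintro ⟨A, hA⟩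
    rw [hY, hA]
    exact ellipsoid_eq hb hhb A
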